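/- There exists a constant C > 0 (depending only on d and ŵ) such that for every integer N ≥ 2, every λ with 0 < λ ≤ 2/N, and every admissible Ψ that minimizes the energy, i.e. ℰ_{λ,N}(Ψ) = E(λ,N), one has ⟨𝒩₊⟩_Ψ ≤ C and ⟨𝒩₊²⟩_Ψ ≤ C. -/

import Mathlib

open MeasureTheory Real

noncomputable section

/-- The unit cube `[0,1]^{dN}` in the configuration space of `N` particles in `ℝ^d`. -/
def cube (d N : ℕ) : Set (Fin N → Fin d → ℝ) :=
  Set.univ.pi fun _ => Set.univ.pi fun _ => Set.Icc (0 : ℝ) 1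

/-- The unit cube `[0,1]^d` in `ℝ^d`. -/
def cube1 (d : ℕ) : Set (Fin d → ℝ) :=
  Set.univ.pi fun _ => Set.Icc (0 : ℝ) 1

/-- `Ψ` is admissible: smooth, `ℤ^d`-periodic in each particle variable, symmetric under
permutations of the particles, and `L²`-normalized on the unit cube. -/
def IsAdmissible (d N : ℕ) (Ψ : (Fin N → Fin d → ℝ) → ℂ) : Prop :=
  ContDiff ℝ (⊤ : ℕ∞) Ψ ∧
  (∀ (x : Fin N → Fin d → ℝ) (j : Fin N) (v : Fin d → ℤ),
      Ψ (Function.update x j (x j + fun i => (v i : ℝ))) = Ψ x) ∧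
  (∀ (σ : Equiv.Perm (Fin N)) (x : Fin N → Fin d → ℝ), Ψ (x ∘ σ) = Ψ x) ∧
  (∫ x in cube d N, ‖Ψ x‖ ^ 2) = 1

/-- The energy `ℰ_{λ,N}(Ψ)` of a wave function `Ψ`. -/
def energy (d N : ℕ) (lam : ℝ) (w : (Fin d → ℝ) → ℝ)
    (Ψ : (Fin N → Fin d → ℝ) → ℂ) : ℝ :=
  ∫ x in cube d N,
    ((∑ j : Fin N, ∑ i : Fin d, ‖fderiv ℝ Ψ x (Pi.single j (Pi.single i 1))‖ ^ 2) +
      lam * (∑ j : Fin N, ∑ k : Fin N, if j < k then w (x j - x k) else 0) * ‖Ψ x‖ ^ 2)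

/-- The ground state energy `E(λ,N)`. -/
def GSE (d N : ℕ) (lam : ℝ) (w : (Fin d → ℝ) → ℝ) : ℝ :=
  sInf {e | ∃ Ψ, IsAdmissible d N Ψ ∧ energy d N lam w Ψ = e}

/-- The interaction potential defined by the absolutely convergent Fourier series
`w(x) = ∑_{p ∈ (2πℤ)^d} ŵ(p) e^{ip·x}`, with the lattice point `p = 2πk` indexed by
`k ∈ ℤ^d`. -/
def wOf (d : ℕ) (hw : (Fin d → ℤ) → ℝ) (x : Fin d → ℝ) : ℝ :=
  (∑' k : Fin d → ℤ,
    (hw k : ℂ) * Complex.exp (Complex.I * ((∑ i, (2 * π * (k i : ℝ)) * x i : ℝ) : ℂ))).re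

/-- `|p|²` for the lattice point `p = 2πk`. -/
def pSq (d : ℕ) (k : Fin d → ℤ) : ℝ := ∑ i, (2 * π * (k i : ℝ)) ^ 2

/-- The elementary excitation energy `e_p = √(|p|⁴ + 2|p|²ŵ(p))`. -/
def ePk (d : ℕ) (hw : (Fin d → ℤ) → ℝ) (k : Fin d → ℤ) : ℝ :=
  Real.sqrt (pSq d k ^ 2 + 2 * pSq d k * hw k)

/-- The Bogoliubov coefficient `α_p = ŵ(p)/(|p|² + ŵ(p) + e_p)`. -/
def alphaP (d : ℕ) (hw : (Fin d → ℤ) → ℝ) (k : Fin d → ℤ) : ℝ :=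
  hw k / (pSq d k + hw k + ePk d hw k)

/-- The Bogoliubov ground state energy
`e_B = -(1/2) ∑_{p ≠ 0} (|p|² + ŵ(p) - e_p)`. -/
def eB (d : ℕ) (hw : (Fin d → ℤ) → ℝ) : ℝ :=
  -(1 / 2) * ∑' k : {k : Fin d → ℤ // k ≠ 0}, (pSq d k.1 + hw k.1 - ePk d hw k.1)

/-- The projection `Q_j` removing the condensate in the `j`-th variable. -/
def Qop (d N : ℕ) (j : Fin N) (Ψ : (Fin N → Fin d → ℝ) → ℂ) :
    (Fin N → Fin d → ℝ) → ℂ :=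
  fun x => Ψ x - ∫ y in cube1 d, Ψ (Function.update x j y)

/-- The expected number of excited particles `⟨𝒩₊⟩_Ψ`. -/
def NplusExp (d N : ℕ) (Ψ : (Fin N → Fin d → ℝ) → ℂ) : ℝ :=
  ∑ j : Fin N, ∫ x in cube d N, ‖Qop d N j Ψ x‖ ^ 2

/-- The second moment `⟨𝒩₊²⟩_Ψ` of the number of excited particles. -/
def NplusSqExp (d N : ℕ) (Ψ : (Fin N → Fin d → ℝ) → ℂ) : ℝ :=
  ∑ j : Fin N, ∑ k : Fin N, ∫ x in cube d N, ‖Qop d N j (Qop d N k Ψ) x‖ ^ 2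

/-!
Write `P_j` for the average over the `j`-th particle and `Q_j = 1 - P_j`. Since `w` is of positive
type, the interaction is at least its mean-field value up to an error of order `λ N w(0)`, and the
constant trial function shows that `E(λ,N)` is at most that value, so the potential minus `E(λ,N)`
is at least `-κ` with `κ = λ N w(0)`. The Laplacian of the unit torus has a spectral gap (which
exceeds `1`), hence `⟨𝒩₊⟩ ≤ κ` for a minimizer.

For the second moment, test the Euler–Lagrange equation of `Ψ` with `∑_j Q_j Ψ`. The gap, applied to
each `Q_j Ψ`, bounds the diagonal part from below by `⟨𝒩₊²⟩ - κ ⟨𝒩₊⟩`. What remains are the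
integrals of `w(x_j - x_k) ⟪P_j Ψ, Q_j Ψ⟫`; inserting `1 = P_k + Q_k`, the `P_k P_j`–`P_k Q_j` part
vanishes because `w(x_j - x_k)` has constant `x_k`-average, and Cauchy–Schwarz bounds the others by
half of `⟨𝒩₊²⟩` plus terms in `κ`, so that `⟨𝒩₊²⟩ ≤ 5 κ²`.
-/

theorem measurePreserving_update {ι : Type*} [Fintype ι] [DecidableEq ι] {α : ι → Type*}
    [∀ i, MeasurableSpace (α i)] (ν : ∀ i, Measure (α i)) [∀ i, IsProbabilityMeasure (ν i)]
    (j : ι) :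
    MeasurePreserving (fun p : (∀ i, α i) × α j => Function.update p.1 j p.2)
      ((Measure.pi ν).prod (ν j)) (Measure.pi ν) := by
  have hmeas : Measurable fun p : (∀ i, α i) × α j => Function.update p.1 j p.2 :=
    measurable_update'
  refine ⟨hmeas, (Measure.pi_eq fun s hs => ?_).symm⟩
  have hpre : (fun p : (∀ i, α i) × α j => Function.update p.1 j p.2) ⁻¹' Set.univ.pi s =
      Set.univ.pi (Function.update s j Set.univ) ×ˢ s j := by
    ext ⟨x, y⟩
    simp only [Set.mem_preimage, Set.mem_univ_pi, Set.mem_prod]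
    refine ⟨fun h => ⟨fun i => ?_, by simpa using h j⟩, fun ⟨hx, hy⟩ i => ?_⟩
    · obtain rfl | hi := eq_or_ne i j
      · simp
      · simpa [hi] using h i
    · obtain rfl | hi := eq_or_ne i j
      · simpa using hy
      · simpa [hi] using hx i
  rw [Measure.map_apply hmeas (.univ_pi hs), hpre, Measure.prod_prod, Measure.pi_pi,
    ← Finset.prod_erase_mul _ _ (Finset.mem_univ j),
    ← Finset.prod_erase_mul _ _ (Finset.mem_univ j), Function.update_self, measure_univ, mul_one]
  congr 1
  exact Finset.prod_congr rfl fun i hi => by rw [Function.update_of_ne (Finset.ne_of_mem_erase hi)]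

/-- The power `K^ι` of a set `K`, as a set of families indexed by `ι`. The cubes of the problem are
`cube1 d = box (Fin d) [0,1]` and `cube d N = box (Fin N) (cube1 d)`, both by unfolding. -/
abbrev box (ι : Type*) {E : Type*} (K : Set E) : Set (ι → E) := Set.univ.pi fun _ => K

section Box

variable {ι E F : Type*} [Fintype ι] [MeasureSpace E] {K : Set E}

theorem volume_restrict_box [SigmaFinite (volume : Measure E)] :
    (volume : Measure (ι → E)).restrict (box ι K) = .pi fun _ => volume.restrict K :=
  Measure.restrict_pi_pi _ _

instance isProbabilityMeasure_box [SigmaFinite (volume : Measure E)]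
    [IsProbabilityMeasure (volume.restrict K)] :
    IsProbabilityMeasure ((volume : Measure (ι → E)).restrict (box ι K)) := by
  rw [volume_restrict_box]
  infer_instance

theorem integrableOn_box [MetricSpace E] [ProperSpace E] [BorelSpace E]
    [IsLocallyFiniteMeasure (volume : Measure E)] [NormedAddCommGroup F] {f : (ι → E) → F}
    (hK : IsCompact K) (hf : Continuous f) : IntegrableOn f (box ι K) :=
  hf.continuousOn.integrableOn_compact (isCompact_univ_pi fun _ => hK)

theorem integral_norm_sq_add_of_orthogonal [MetricSpace E] [ProperSpace E] [BorelSpace E]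
    [IsLocallyFiniteMeasure (volume : Measure E)] [NormedAddCommGroup F] [InnerProductSpace ℝ F]
    {f g : (ι → E) → F} (hK : IsCompact K) (hf : Continuous f) (hg : Continuous g)
    (horth : ∫ x in box ι K, inner ℝ (f x) (g x) = 0) :
    ∫ x in box ι K, ‖f x + g x‖ ^ 2 =
      (∫ x in box ι K, ‖f x‖ ^ 2) + ∫ x in box ι K, ‖g x‖ ^ 2 := by
  simp_rw [norm_add_sq_real]
  rw [integral_add, integral_add, integral_const_mul, horth, mul_zero, add_zero] <;>
    exact integrableOn_box hK (by fun_prop)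

end Box

theorem apply_update_of_dependsOn {ι E β : Type*} [DecidableEq ι] {j : ι} {f : (ι → E) → β}
    (hf : DependsOn f {j}ᶜ) (x : ι → E) (y : E) : f (Function.update x j y) = f x :=
  hf fun _ hi => Function.update_of_ne hi y x

theorem continuous_update_snd {ι E : Type*} [DecidableEq ι] [TopologicalSpace E] (x : ι → E)
    (j : ι) : Continuous fun y : E => Function.update x j y :=
  continuous_const.update j continuous_id

section CoordAvg

variable {ι E F : Type*} [DecidableEq ι] [MeasureSpace E] [NormedAddCommGroup F] [NormedSpace ℝ F]

/-- The average of `f` over its `j`-th variable, ranging over `K`. This is the projection onto the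
functions that do not depend on the `j`-th variable, i.e. the condensate projection `P_j` when `K`
is the unit cube. -/
def coordAvg (K : Set E) (j : ι) (f : (ι → E) → F) (x : ι → E) : F :=
  ∫ y in K, f (Function.update x j y)

/-- The fluctuation `Q_j f = f - P_j f` of `f` in its `j`-th variable. When `K` is the unit cube it
unfolds to `Qop`. -/
def coordFluct (K : Set E) (j : ι) (f : (ι → E) → F) (x : ι → E) : F :=
  f x - coordAvg K j f x

variable {K : Set E} {j : ι} {s : Set ι} {f : (ι → E) → F}

theorem dependsOn_coordAvg (hf : DependsOn f s) : DependsOn (coordAvg K j f) (s \ {j}) := by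
  intro x x' hx
  refine integral_congr_ae (.of_forall fun y => hf fun i hi => ?_)
  obtain rfl | hij := eq_or_ne i j
  · simp
  · simpa [hij] using hx i ⟨hi, hij⟩

theorem dependsOn_compl_coordAvg (f : (ι → E) → F) : DependsOn (coordAvg K j f) {j}ᶜ := by
  simpa [Set.compl_eq_univ_sdiff] using dependsOn_coordAvg (dependsOn_univ f)

theorem coordAvg_of_dependsOn [CompleteSpace F] [IsProbabilityMeasure (volume.restrict K)]
    (hf : DependsOn f {j}ᶜ) : coordAvg K j f = f := by
  ext x
  simp [coordAvg, apply_update_of_dependsOn hf]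

theorem coordFluct_of_dependsOn [CompleteSpace F] [IsProbabilityMeasure (volume.restrict K)]
    (hf : DependsOn f {j}ᶜ) : coordFluct K j f = 0 := by
  ext x
  simp [coordFluct, coordAvg_of_dependsOn hf]

theorem coordAvg_add_coordFluct (f : (ι → E) → F) (x : ι → E) :
    coordAvg K j f x + coordFluct K j f x = f x :=
  add_sub_cancel _ _

end CoordAvg

section CoordAvgContinuous

variable {ι E F : Type*} [DecidableEq ι] [MetricSpace E] [ProperSpace E] [MeasureSpace E]
  [BorelSpace E] [IsLocallyFiniteMeasure (volume : Measure E)]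
  [NormedAddCommGroup F] {K : Set E} {j k : ι} {f g : (ι → E) → F}

theorem integrableOn_comp_update (hK : IsCompact K) (hf : Continuous f) (x : ι → E) :
    IntegrableOn (fun y => f (Function.update x j y)) K :=
  (hf.comp (continuous_update_snd x j)).continuousOn.integrableOn_compact hK

variable [NormedSpace ℝ F]

theorem coordAvg_sub (hK : IsCompact K) (hf : Continuous f) (hg : Continuous g) :
    coordAvg K j (f - g) = coordAvg K j f - coordAvg K j g :=
  funext fun x => integral_sub (integrableOn_comp_update hK hf x) (integrableOn_comp_update hK hg x)

theorem coordAvg_comm (hK : IsCompact K) (hf : Continuous f) :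
    coordAvg K j (coordAvg K k f) = coordAvg K k (coordAvg K j f) := by
  obtain rfl | hjk := eq_or_ne j k
  · rfl
  ext x
  have hcont : Continuous fun p : E × E => f (Function.update (Function.update x j p.1) k p.2) :=
    hf.comp (((continuous_update_snd x j).comp continuous_fst).update k continuous_snd)
  have hint : Integrable (fun p : E × E => f (Function.update (Function.update x j p.1) k p.2))
      ((volume.restrict K).prod (volume.restrict K)) := by
    rw [Measure.prod_restrict]
    exact hcont.continuousOn.integrableOn_compact (hK.prod hK)
  simp only [coordAvg]
  rw [integral_integral_swap hint]
  simp only [Function.update_comm hjk]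

variable [Finite ι]

theorem continuous_coordAvg (hK : IsCompact K) (hf : Continuous f) :
    Continuous (coordAvg K j f) := by
  have := Fintype.ofFinite ι
  exact continuous_parametric_integral_of_continuous (f := fun x y => f (Function.update x j y))
    (hf.comp (continuous_fst.update j continuous_snd)) hK

theorem continuous_coordFluct (hK : IsCompact K) (hf : Continuous f) :
    Continuous (coordFluct K j f) :=
  hf.sub (continuous_coordAvg hK hf)

theorem coordFluct_coordAvg_comm (hK : IsCompact K) (hf : Continuous f) :
    coordFluct K j (coordAvg K k f) = coordAvg K k (coordFluct K j f) := by
  change coordAvg K k f - coordAvg K j (coordAvg K k f) = coordAvg K k (f - coordAvg K j f)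
  rw [coordAvg_sub hK hf (continuous_coordAvg hK hf), coordAvg_comm hK hf]

theorem coordAvg_coordFluct_self [CompleteSpace F] [IsProbabilityMeasure (volume.restrict K)]
    (hK : IsCompact K) (hf : Continuous f) : coordAvg K j (coordFluct K j f) = 0 := by
  rw [← coordFluct_coordAvg_comm hK hf]
  exact coordFluct_of_dependsOn (dependsOn_compl_coordAvg f)

end CoordAvgContinuous

section CoordAvgIntegral

variable {ι E F : Type*} [Fintype ι] [DecidableEq ι] [MetricSpace E] [ProperSpace E]
  [MeasureSpace E] [BorelSpace E] [IsLocallyFiniteMeasure (volume : Measure E)]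
  {K : Set E} [IsProbabilityMeasure (volume.restrict K)] {j : ι}

theorem integral_coordAvg [NormedAddCommGroup F] [NormedSpace ℝ F] {f : (ι → E) → F}
    (hK : IsCompact K) (hf : Continuous f) :
    ∫ x in box ι K, coordAvg K j f x = ∫ x in box ι K, f x := by
  have hmp := measurePreserving_update (fun _ : ι => volume.restrict K) j
  rw [← volume_restrict_box] at hmp
  have hint : Integrable (fun p : (ι → E) × E => f (Function.update p.1 j p.2))
      ((volume.restrict (box ι K)).prod (volume.restrict K)) :=
    hmp.integrable_comp_of_integrable (integrableOn_box hK hf)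
  calc ∫ x in box ι K, coordAvg K j f x
      = ∫ p, f (Function.update p.1 j p.2)
          ∂(volume.restrict (box ι K)).prod (volume.restrict K) := (integral_prod _ hint).symm
    _ = ∫ x in box ι K, f x := by
        rw [← integral_map hmp.aemeasurable (hf.aestronglyMeasurable), hmp.map_eq]

theorem integral_mul_of_dependsOn {W g : (ι → E) → ℝ} (hK : IsCompact K) (hW : Continuous W)
    (hg : Continuous g) (hgj : DependsOn g {j}ᶜ) :
    ∫ x in box ι K, W x * g x = ∫ x in box ι K, coordAvg K j W x * g x := by
  rw [← integral_coordAvg (j := j) hK (hW.fun_mul hg)]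
  congr with x
  simp only [coordAvg, apply_update_of_dependsOn hgj, integral_mul_const]

variable [NormedAddCommGroup F] [InnerProductSpace ℝ F] [CompleteSpace F] {f g : (ι → E) → F}

theorem integral_inner_coordAvg_of_dependsOn (hK : IsCompact K) (hf : Continuous f)
    (hfj : DependsOn f {j}ᶜ) (hg : Continuous g) :
    ∫ x in box ι K, inner ℝ (f x) (coordAvg K j g x) = ∫ x in box ι K, inner ℝ (f x) (g x) := by
  rw [← integral_coordAvg (j := j) (f := fun x => inner ℝ (f x) (g x)) hK (hf.inner hg)]
  congr with x
  simp only [coordAvg, apply_update_of_dependsOn hfj]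
  exact (integral_inner (integrableOn_comp_update hK hg x) _).symm

theorem integral_inner_coordAvg_coordFluct (hK : IsCompact K) (hf : Continuous f)
    (hg : Continuous g) :
    ∫ x in box ι K, inner ℝ (coordAvg K j f x) (coordFluct K j g x) = 0 := by
  rw [← integral_inner_coordAvg_of_dependsOn hK (continuous_coordAvg hK hf)
    (dependsOn_compl_coordAvg f) (continuous_coordFluct hK hg), coordAvg_coordFluct_self hK hg]
  simp

theorem integral_inner_coordFluct_right (hK : IsCompact K) (hf : Continuous f)
    (hg : Continuous g) :
    ∫ x in box ι K, inner ℝ (f x) (coordFluct K j g x) =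
      ∫ x in box ι K, inner ℝ (coordFluct K j f x) (coordFluct K j g x) := by
  have hP := continuous_coordAvg (j := j) hK hf
  have hQf := continuous_coordFluct (j := j) hK hf
  have hQg := continuous_coordFluct (j := j) hK hg
  simp_rw [← coordAvg_add_coordFluct (K := K) (j := j) f, inner_add_left]
  rw [integral_add (integrableOn_box hK (hP.inner hQg)) (integrableOn_box hK (hQf.inner hQg)),
    integral_inner_coordAvg_coordFluct hK hf hg, zero_add]

theorem integral_norm_sq_eq_coordAvg_add_coordFluct (hK : IsCompact K) (hf : Continuous f) :
    ∫ x in box ι K, ‖f x‖ ^ 2 =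
      (∫ x in box ι K, ‖coordAvg K j f x‖ ^ 2) + ∫ x in box ι K, ‖coordFluct K j f x‖ ^ 2 := by
  rw [← integral_norm_sq_add_of_orthogonal hK (continuous_coordAvg hK hf)
    (continuous_coordFluct hK hf) (integral_inner_coordAvg_coordFluct hK hf hf)]
  simp only [coordAvg_add_coordFluct]

theorem integral_norm_sq_coordAvg_le (hK : IsCompact K) (hf : Continuous f) :
    ∫ x in box ι K, ‖coordAvg K j f x‖ ^ 2 ≤ ∫ x in box ι K, ‖f x‖ ^ 2 := by
  rw [integral_norm_sq_eq_coordAvg_add_coordFluct (j := j) hK hf]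
  exact le_add_of_nonneg_right (integral_nonneg fun _ => sq_nonneg _)

end CoordAvgIntegral

section EfronStein

variable {ι E F : Type*} [DecidableEq ι] [MeasureSpace E] [NormedAddCommGroup F]

/-- The average of `u` over all the variables listed in `l`; it interpolates between `u` and its
mean in the proof of the Efron–Stein inequality. -/
def listAvg [NormedSpace ℝ F] (K : Set E) (l : List ι) (u : (ι → E) → F) : (ι → E) → F :=
  l.foldr (coordAvg K) u

theorem dependsOn_listAvg [NormedSpace ℝ F] {K : Set E} (u : (ι → E) → F) (l : List ι) :
    DependsOn (listAvg K l u) {i | i ∉ l} := by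
  induction l with
  | nil => exact (dependsOn_univ u).mono (by simp)
  | cons j l ih => exact (dependsOn_coordAvg ih).mono fun i hi => by simp_all

variable [MetricSpace E] [ProperSpace E] [BorelSpace E]
  [IsLocallyFiniteMeasure (volume : Measure E)] {K : Set E} {u : (ι → E) → F}

theorem continuous_listAvg [Finite ι] [NormedSpace ℝ F] (hK : IsCompact K) (hu : Continuous u)
    (l : List ι) : Continuous (listAvg K l u) := by
  induction l with
  | nil => exact hu
  | cons j l ih => exact continuous_coordAvg hK ih

variable [Fintype ι] [IsProbabilityMeasure (volume.restrict K)]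

theorem integral_listAvg [NormedSpace ℝ F] (hK : IsCompact K) (hu : Continuous u) (l : List ι) :
    ∫ x in box ι K, listAvg K l u x = ∫ x in box ι K, u x := by
  induction l with
  | nil => rfl
  | cons j l ih => exact (integral_coordAvg hK (continuous_listAvg hK hu l)).trans ih

theorem listAvg_eq_integral [NormedSpace ℝ F] [CompleteSpace F] (hK : IsCompact K)
    (hu : Continuous u) {l : List ι} (hl : ∀ i, i ∈ l) (x : ι → E) :
    listAvg K l u x = ∫ z in box ι K, u z := by
  have hconst : ∀ z, listAvg K l u z = listAvg K l u x := fun z =>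
    ((dependsOn_listAvg u l).mono (t := ∅) fun i hi => absurd (hl i) hi).empty z x
  rw [← integral_listAvg hK hu l]
  simp only [hconst, integral_const, probReal_univ, one_smul]

variable [InnerProductSpace ℝ F] [CompleteSpace F]

theorem integral_norm_sub_listAvg_sq_le (hK : IsCompact K) (hu : Continuous u) (l : List ι) :
    ∫ x in box ι K, ‖u x - listAvg K l u x‖ ^ 2 ≤
      (l.map fun i => ∫ x in box ι K, ‖coordFluct K i u x‖ ^ 2).sum := by
  induction l with
  | nil => simp [listAvg]
  | cons j l ih =>
    have hl := continuous_listAvg hK hu l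
    have hsub := hu.sub hl
    have hsplit : ∀ x, u x - listAvg K (j :: l) u x =
        coordAvg K j (u - listAvg K l u) x + coordFluct K j u x := by
      intro x
      rw [coordAvg_sub hK hu hl]
      exact (sub_add_sub_cancel' _ _ _).symm
    simp_rw [hsplit]
    rw [integral_norm_sq_add_of_orthogonal hK (continuous_coordAvg hK hsub)
      (continuous_coordFluct hK hu) (integral_inner_coordAvg_coordFluct hK hsub hu), add_comm,
      List.map_cons, List.sum_cons]
    gcongr
    exact (integral_norm_sq_coordAvg_le hK hsub).trans ih

theorem efron_stein (hK : IsCompact K) (hu : Continuous u) :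
    ∫ x in box ι K, ‖u x - ∫ z in box ι K, u z‖ ^ 2 ≤
      ∑ i, ∫ x in box ι K, ‖coordFluct K i u x‖ ^ 2 := by
  have h := integral_norm_sub_listAvg_sq_le hK hu Finset.univ.toList
  simpa only [listAvg_eq_integral hK hu (fun i => Finset.mem_toList.2 (Finset.mem_univ i)),
    Finset.sum_map_toList] using h

end EfronStein

section PartialDeriv

variable {ι E F : Type*} [DecidableEq ι] [NormedAddCommGroup E] [NormedSpace ℝ E]

/-- The projection setting the `j`-th variable to `0`, which is the derivative in `x` of
`Function.update x j y`. -/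
def zeroCoord (j : ι) : (ι → E) →L[ℝ] (ι → E) :=
  ContinuousLinearMap.pi fun k => if k = j then 0 else ContinuousLinearMap.proj k

theorem zeroCoord_apply (j : ι) (x : ι → E) : zeroCoord j x = Function.update x j 0 := by
  ext k
  by_cases h : k = j <;> simp [zeroCoord, h]

theorem zeroCoord_single (j k : ι) (v : E) :
    zeroCoord j (Pi.single k v) = if k = j then 0 else Pi.single k v := by
  ext l
  obtain rfl | hkj := eq_or_ne k j
  · by_cases h : l = k <;> simp [zeroCoord_apply, h]
  · by_cases h : l = j <;> simp [zeroCoord_apply, h, hkj, hkj.symm]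

theorem hasFDerivAt_update_left [Finite ι] (j : ι) (x : ι → E) (y : E) :
    HasFDerivAt (fun x : ι → E => Function.update x j y) (zeroCoord j) x := by
  have h : (fun x : ι → E => Function.update x j y) = fun x => zeroCoord j x + Pi.single j y := by
    ext x k
    by_cases h : k = j
    · subst h; simp [zeroCoord_apply]
    · simp [zeroCoord_apply, h]
  have := Fintype.ofFinite ι
  rw [h]
  exact (zeroCoord (E := E) j).hasFDerivAt.add_const _

variable [NormedAddCommGroup F] [NormedSpace ℝ F]

/-- The derivative of `f` along the direction `v` of its `k`-th variable. -/
def partialDeriv (k : ι) (v : E) (f : (ι → E) → F) (x : ι → E) : F :=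
  fderiv ℝ f x (Pi.single k v)

theorem fderiv_comp_update_apply [Finite ι] {f : (ι → E) → F} {x : ι → E} {k : ι} {y : E}
    (hf : DifferentiableAt ℝ f (Function.update x k y)) (v : E) :
    fderiv ℝ (fun z => f (Function.update x k z)) y v =
      partialDeriv k v f (Function.update x k y) := by
  have := Fintype.ofFinite ι
  have h := (hf.hasFDerivAt.comp y (hasFDerivAt_update x y)).fderiv
  simp only [Function.comp_def] at h
  rw [h]
  refine congrArg (fderiv ℝ f (Function.update x k y)) (funext fun l => ?_)
  obtain rfl | hl := eq_or_ne l k <;> simp [*]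

variable [Fintype ι]

theorem continuous_partialDeriv {f : (ι → E) → F} (hf : ContDiff ℝ 1 f) (k : ι) (v : E) :
    Continuous (partialDeriv k v f) :=
  (hf.continuous_fderiv one_ne_zero).clm_apply continuous_const

variable [FiniteDimensional ℝ E] [MeasureSpace E] [BorelSpace E]
  [IsLocallyFiniteMeasure (volume : Measure E)] {K : Set E} {j k : ι} {f : (ι → E) → F}

theorem hasFDerivAt_coordAvg (hK : IsCompact K) (hf : ContDiff ℝ 1 f) (x : ι → E) :
    HasFDerivAt (coordAvg K j f) (coordAvg K j (fun z => (fderiv ℝ f z).comp (zeroCoord j)) x)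
      x := by
  have hcont : Continuous fun z => (fderiv ℝ f z).comp (zeroCoord j) :=
    (hf.continuous_fderiv one_ne_zero).clm_comp continuous_const
  have hderiv : ∀ (y : E) (z : ι → E), HasFDerivAt (fun x => f (Function.update x j y))
      ((fderiv ℝ f (Function.update z j y)).comp (zeroCoord j)) z := fun y z =>
    (hf.differentiable one_ne_zero _).hasFDerivAt.comp z (hasFDerivAt_update_left j z y)
  have hmeas : ∀ z : ι → E, AEStronglyMeasurable (fun y => f (Function.update z j y))
      (volume.restrict K) := fun z => (integrableOn_comp_update hK hf.continuous z).1
  obtain ⟨C, hC⟩ := ((isCompact_closedBall x 1).prod hK).exists_bound_of_continuousOn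
    (hcont.comp (continuous_fst.update j continuous_snd)).continuousOn
  refine hasFDerivAt_integral_of_dominated_of_fderiv_le (bound := fun _ => C)
    (Metric.closedBall_mem_nhds x one_pos) (.of_forall hmeas)
    (integrableOn_comp_update hK hf.continuous x) (integrableOn_comp_update hK hcont x).1
    ((ae_restrict_mem hK.measurableSet).mono fun y hy z hz => hC (z, y) ⟨hz, hy⟩)
    (continuous_const.continuousOn.integrableOn_compact hK)
    (.of_forall fun y z _ => hderiv y z)

theorem partialDeriv_coordAvg (hK : IsCompact K) (hf : ContDiff ℝ 1 f) (v : E) :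
    partialDeriv k v (coordAvg K j f) =
      if k = j then 0 else coordAvg K j (partialDeriv k v f) := by
  ext x
  have hcont : Continuous fun z => (fderiv ℝ f z).comp (zeroCoord j) :=
    (hf.continuous_fderiv one_ne_zero).clm_comp continuous_const
  rw [partialDeriv, (hasFDerivAt_coordAvg hK hf x).fderiv, coordAvg,
    ContinuousLinearMap.integral_apply (integrableOn_comp_update hK hcont x)]
  split_ifs with h <;> simp [zeroCoord_single, h, coordAvg, partialDeriv]

theorem contDiff_coordAvg_nat (hK : IsCompact K) {n : ℕ} (hf : ContDiff ℝ n f) :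
    ContDiff ℝ n (coordAvg K j f) := by
  induction n generalizing f with
  | zero => exact contDiff_zero.2 (continuous_coordAvg hK (contDiff_zero.1 hf))
  | succ n ih =>
    have hf1 : ContDiff ℝ 1 f := hf.of_le (mod_cast Nat.le_add_left 1 n)
    have hfd : ContDiff ℝ n fun z => (fderiv ℝ f z).comp (zeroCoord j) :=
      (hf.fderiv_right le_rfl).clm_comp contDiff_const
    rw [Nat.cast_succ]
    refine contDiff_succ_iff_fderiv_apply.2
      ⟨fun x => (hasFDerivAt_coordAvg hK hf1 x).differentiableAt, by simp, fun v => ?_⟩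
    have hv : (fun x => fderiv ℝ (coordAvg K j f) x v) =
        coordAvg K j fun z => fderiv ℝ f z (zeroCoord j v) := by
      ext x
      rw [(hasFDerivAt_coordAvg hK hf1 x).fderiv, coordAvg, ContinuousLinearMap.integral_apply
        (integrableOn_comp_update hK hfd.continuous x)]
      rfl
    rw [hv]
    exact ih (hfd.clm_apply contDiff_const)

theorem contDiff_coordAvg (hK : IsCompact K) {n : ℕ∞} (hf : ContDiff ℝ n f) :
    ContDiff ℝ n (coordAvg K j f) :=
  contDiff_iff_forall_nat_le.2 fun _ hm =>
    contDiff_coordAvg_nat hK (hf.of_le (mod_cast hm))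

theorem contDiff_coordFluct (hK : IsCompact K) {n : ℕ∞} (hf : ContDiff ℝ n f) :
    ContDiff ℝ n (coordFluct K j f) :=
  hf.sub (contDiff_coordAvg hK hf)

theorem partialDeriv_coordFluct (hK : IsCompact K) (hf : ContDiff ℝ 1 f) (v : E) :
    partialDeriv k v (coordFluct K j f) =
      if k = j then partialDeriv k v f else coordFluct K j (partialDeriv k v f) := by
  have hsub : partialDeriv k v (coordFluct K j f) =
      partialDeriv k v f - partialDeriv k v (coordAvg K j f) := by
    ext x
    have hfx := hf.differentiable one_ne_zero x
    have hPx := (hasFDerivAt_coordAvg (j := j) hK hf x).differentiableAt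
    exact congrArg (· (Pi.single k v)) (fderiv_sub hfx hPx)
  rw [hsub, partialDeriv_coordAvg hK hf]
  split_ifs
  · exact sub_zero _
  · rfl

end PartialDeriv

theorem integral_inner_partialDeriv_coordFluct {ι E F : Type*} [Fintype ι] [DecidableEq ι]
    [NormedAddCommGroup E] [NormedSpace ℝ E] [FiniteDimensional ℝ E] [MeasureSpace E]
    [BorelSpace E] [IsLocallyFiniteMeasure (volume : Measure E)] [NormedAddCommGroup F]
    [InnerProductSpace ℝ F] [CompleteSpace F] {K : Set E} [IsProbabilityMeasure (volume.restrict K)]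
    {f : (ι → E) → F} (hK : IsCompact K) (hf : ContDiff ℝ 1 f) (j k : ι) (v : E) :
    ∫ x in box ι K, inner ℝ (partialDeriv k v f x) (partialDeriv k v (coordFluct K j f) x) =
      ∫ x in box ι K, ‖partialDeriv k v (coordFluct K j f) x‖ ^ 2 := by
  have hD := continuous_partialDeriv hf k v
  simp_rw [← real_inner_self_eq_norm_sq, partialDeriv_coordFluct hK hf]
  split_ifs
  · rfl
  · exact integral_inner_coordFluct_right hK hD hD

section Poincare

variable {ι κ F : Type*}

instance isProbabilityMeasure_unitInterval :
    IsProbabilityMeasure (volume.restrict (Set.Icc (0 : ℝ) 1)) :=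
  ⟨by simp⟩

theorem sq_integral_norm_le_integral_norm_sq {α : Type*} [MeasurableSpace α] {μ : Measure α}
    [IsProbabilityMeasure μ] [NormedAddCommGroup F] {f : α → F} (hf : Integrable f μ)
    (hf2 : Integrable (fun x => ‖f x‖ ^ 2) μ) : (∫ x, ‖f x‖ ∂μ) ^ 2 ≤ ∫ x, ‖f x‖ ^ 2 ∂μ :=
  even_two.convexOn_pow.map_integral_le (continuous_pow 2).continuousOn isClosed_univ
    (by simp) hf.norm hf2

theorem norm_sub_sq_le_integral_deriv [NormedAddCommGroup F] [NormedSpace ℝ F]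
    [CompleteSpace F] {g : ℝ → F} (hg : ContDiff ℝ 1 g) {a b : ℝ}
    (ha : a ∈ Set.Icc (0 : ℝ) 1) (hb : b ∈ Set.Icc (0 : ℝ) 1) :
    ‖g a - g b‖ ^ 2 ≤ ∫ s in Set.Icc (0 : ℝ) 1, ‖deriv g s‖ ^ 2 := by
  have hcont : Continuous (deriv g) := hg.continuous_deriv_one
  have hint : IntegrableOn (deriv g) (Set.Icc 0 1) :=
    hcont.continuousOn.integrableOn_compact isCompact_Icc
  have hftc : ‖g a - g b‖ ≤ ∫ s in Set.Icc (0 : ℝ) 1, ‖deriv g s‖ := by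
    rw [← intervalIntegral.integral_deriv_eq_sub
      (fun s _ => hg.differentiable one_ne_zero s) (hcont.intervalIntegrable b a)]
    exact intervalIntegral.norm_integral_le_integral_norm_uIoc.trans <|
      setIntegral_mono_set hint.norm (.of_forall fun _ => norm_nonneg _) <|
        .of_forall <| Set.uIoc_subset_uIcc.trans (Set.uIcc_subset_Icc hb ha)
  calc ‖g a - g b‖ ^ 2 ≤ (∫ s in Set.Icc (0 : ℝ) 1, ‖deriv g s‖) ^ 2 := by gcongr
    _ ≤ _ := sq_integral_norm_le_integral_norm_sq hint
        ((hcont.norm.pow 2).continuousOn.integrableOn_compact isCompact_Icc)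

theorem norm_sub_integral_sq_le_integral_deriv [NormedAddCommGroup F] [NormedSpace ℝ F]
    [CompleteSpace F] {g : ℝ → F} (hg : ContDiff ℝ 1 g) {a : ℝ} (ha : a ∈ Set.Icc (0 : ℝ) 1) :
    ‖g a - ∫ s in Set.Icc (0 : ℝ) 1, g s‖ ^ 2 ≤ ∫ s in Set.Icc (0 : ℝ) 1, ‖deriv g s‖ ^ 2 := by
  have hint : IntegrableOn g (Set.Icc 0 1) :=
    hg.continuous.continuousOn.integrableOn_compact isCompact_Icc
  have hmean : g a - ∫ s in Set.Icc (0 : ℝ) 1, g s = ∫ s in Set.Icc (0 : ℝ) 1, (g a - g s) := by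
    rw [integral_sub (integrable_const _) hint]
    simp
  have hbound : ‖∫ s in Set.Icc (0 : ℝ) 1, (g a - g s)‖ ≤
      √(∫ s in Set.Icc (0 : ℝ) 1, ‖deriv g s‖ ^ 2) := by
    have h := norm_setIntegral_le_of_norm_le_const (μ := volume) (by simp) fun s hs =>
      Real.le_sqrt_of_sq_le (norm_sub_sq_le_integral_deriv hg ha hs)
    simpa only [Real.volume_real_Icc_of_le zero_le_one, sub_zero, mul_one] using h
  rw [hmean]
  exact (Real.le_sqrt (norm_nonneg _) (integral_nonneg fun _ => sq_nonneg _)).1 hbound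

variable [Fintype ι] [DecidableEq ι] [NormedAddCommGroup F] [InnerProductSpace ℝ F]
  [CompleteSpace F]

theorem integral_norm_sq_coordFluct_le_partialDeriv {u : (ι → ℝ) → F} (hu : ContDiff ℝ 1 u)
    (i : ι) :
    ∫ x in box ι (Set.Icc (0 : ℝ) 1), ‖coordFluct (Set.Icc 0 1) i u x‖ ^ 2 ≤
      ∫ x in box ι (Set.Icc (0 : ℝ) 1), ‖partialDeriv i 1 u x‖ ^ 2 := by
  have hD : Continuous fun x => ‖partialDeriv i 1 u x‖ ^ 2 :=
    (continuous_partialDeriv hu i 1).norm.pow 2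
  rw [← integral_coordAvg (j := i) isCompact_Icc hD]
  have hQ := continuous_coordFluct (j := i) (isCompact_Icc (a := (0 : ℝ)) (b := 1)) hu.continuous
  refine setIntegral_mono_on (integrableOn_box isCompact_Icc (hQ.norm.pow 2))
    (integrableOn_box isCompact_Icc (continuous_coordAvg isCompact_Icc hD))
    (isCompact_univ_pi fun _ => isCompact_Icc).measurableSet fun x hx => ?_
  have hslice : ContDiff ℝ 1 fun s : ℝ => u (Function.update x i s) :=
    hu.comp (contDiff_update 1 x i)
  have hderiv : ∀ s, deriv (fun s : ℝ => u (Function.update x i s)) s =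
      partialDeriv i 1 u (Function.update x i s) := fun s =>
    fderiv_apply_one_eq_deriv.symm.trans
      (fderiv_comp_update_apply (hu.differentiable one_ne_zero _) 1)
  have h := norm_sub_integral_sq_le_integral_deriv hslice (hx i trivial)
  simpa only [hderiv, Function.update_eq_self, coordFluct, coordAvg] using h

theorem poincare_unitCube {u : (ι → ℝ) → F} (hu : ContDiff ℝ 1 u) :
    ∫ x in box ι (Set.Icc (0 : ℝ) 1), ‖u x - ∫ z in box ι (Set.Icc (0 : ℝ) 1), u z‖ ^ 2 ≤
      ∑ i, ∫ x in box ι (Set.Icc (0 : ℝ) 1), ‖partialDeriv i 1 u x‖ ^ 2 :=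
  (efron_stein isCompact_Icc hu.continuous).trans
    (Finset.sum_le_sum fun i _ => integral_norm_sq_coordFluct_le_partialDeriv hu i)

theorem spectralGap_coordFluct [Fintype κ] [DecidableEq κ] {f : (ι → κ → ℝ) → F}
    (hf : ContDiff ℝ 1 f) (k : ι) :
    ∫ x in box ι (box κ (Set.Icc (0 : ℝ) 1)), ‖coordFluct (box κ (Set.Icc 0 1)) k f x‖ ^ 2 ≤
      ∑ i, ∫ x in box ι (box κ (Set.Icc (0 : ℝ) 1)), ‖partialDeriv k (Pi.single i 1) f x‖ ^ 2 := by
  have hK : IsCompact (box κ (Set.Icc (0 : ℝ) 1)) := isCompact_univ_pi fun _ => isCompact_Icc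
  have hQ : Continuous fun x => ‖coordFluct (box κ (Set.Icc 0 1)) k f x‖ ^ 2 :=
    (continuous_coordFluct hK hf.continuous).norm.pow 2
  have hD : ∀ i, Continuous fun x => ‖partialDeriv k (Pi.single i 1) f x‖ ^ 2 := fun i =>
    (continuous_partialDeriv hf k (Pi.single i 1)).norm.pow 2
  rw [← integral_coordAvg (j := k) hK hQ,
    Finset.sum_congr rfl fun i _ => (integral_coordAvg (j := k) hK (hD i)).symm]
  rw [← integral_finsetSum _ fun i _ =>
    integrableOn_box hK (continuous_coordAvg hK (hD i))]
  refine integral_mono (integrableOn_box hK (continuous_coordAvg hK hQ))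
    (integrableOn_box hK (continuous_finsetSum _ fun i _ => continuous_coordAvg hK (hD i)))
    fun x => ?_
  have hslice : ContDiff ℝ 1 fun y => f (Function.update x k y) :=
    hf.comp (contDiff_update 1 x k)
  have hderiv : ∀ i y, partialDeriv i 1 (fun y => f (Function.update x k y)) y =
      partialDeriv k (Pi.single i 1) f (Function.update x k y) := fun i y =>
    fderiv_comp_update_apply (hf.differentiable one_ne_zero _) (Pi.single i 1)
  have h := poincare_unitCube hslice
  simp only [hderiv] at h
  simpa only [coordAvg, coordFluct, Function.update_idem] using h

end Poincare

section PairPotential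

/-- The properties of a pair interaction `w` on the torus which the argument uses: besides being
continuous, even and bounded by `w 0`, it has mean `m` and is of positive type, in the quantitative
form `mul_sq_le_sum` (all Fourier coefficients other than the mean `m` are nonnegative). -/
structure IsPairPotential {d : ℕ} (w : (Fin d → ℝ) → ℝ) (m : ℝ) : Prop where
  continuous : Continuous w
  neg : ∀ z, w (-z) = w z
  abs_le : ∀ z, |w z| ≤ w 0
  integral_sub : ∀ z, ∫ y in cube1 d, w (z - y) = m
  mul_sq_le_sum : ∀ (N : ℕ) (x : Fin N → Fin d → ℝ), m * N ^ 2 ≤ ∑ j, ∑ k, w (x j - x k)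

variable {d : ℕ} {hw : (Fin d → ℤ) → ℝ}

/-- The phase `p · x` for the lattice point `p = 2πk`. -/
def latticePhase (k : Fin d → ℤ) (x : Fin d → ℝ) : ℝ := ∑ i, (2 * π * (k i : ℝ)) * x i

theorem continuous_latticePhase (k : Fin d → ℤ) : Continuous (latticePhase k) := by
  unfold latticePhase
  fun_prop

theorem latticePhase_sub (k : Fin d → ℤ) (x y : Fin d → ℝ) :
    latticePhase k (x - y) = latticePhase k x - latticePhase k y := by
  simp [latticePhase, mul_sub, Finset.sum_sub_distrib]

theorem norm_mul_cos_latticePhase_le (hw_nonneg : ∀ k, 0 ≤ hw k) (k : Fin d → ℤ)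
    (x : Fin d → ℝ) : ‖hw k * cos (latticePhase k x)‖ ≤ hw k := by
  rw [norm_mul, norm_of_nonneg (hw_nonneg k)]
  exact mul_le_of_le_one_right (hw_nonneg k) (abs_cos_le_one _)

theorem summable_mul_cos_latticePhase (hw_nonneg : ∀ k, 0 ≤ hw k) (hw_summable : Summable hw)
    (x : Fin d → ℝ) : Summable fun k => hw k * cos (latticePhase k x) :=
  .of_norm_bounded hw_summable fun k => norm_mul_cos_latticePhase_le hw_nonneg k x

theorem wOf_eq_tsum_cos (hw_nonneg : ∀ k, 0 ≤ hw k) (hw_summable : Summable hw)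
    (x : Fin d → ℝ) : wOf d hw x = ∑' k, hw k * cos (latticePhase k x) := by
  have hsum : Summable fun k : Fin d → ℤ =>
      (hw k : ℂ) * Complex.exp (Complex.I * (latticePhase k x : ℂ)) := by
    refine .of_norm_bounded hw_summable fun k => ?_
    rw [norm_mul, mul_comm Complex.I, Complex.norm_exp_ofReal_mul_I, mul_one, Complex.norm_real,
      norm_of_nonneg (hw_nonneg k)]
  refine (Complex.re_tsum hsum).trans (tsum_congr fun k => ?_)
  rw [Complex.re_ofReal_mul, mul_comm Complex.I, Complex.exp_ofReal_mul_I_re]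

theorem continuous_wOf (hw_nonneg : ∀ k, 0 ≤ hw k) (hw_summable : Summable hw) :
    Continuous (wOf d hw) := by
  rw [funext (wOf_eq_tsum_cos hw_nonneg hw_summable)]
  exact continuous_tsum
    (fun k => continuous_const.mul (continuous_cos.comp (continuous_latticePhase k)))
    hw_summable (norm_mul_cos_latticePhase_le hw_nonneg)

theorem wOf_neg (hw_nonneg : ∀ k, 0 ≤ hw k) (hw_summable : Summable hw) (x : Fin d → ℝ) :
    wOf d hw (-x) = wOf d hw x := by
  simp [wOf_eq_tsum_cos hw_nonneg hw_summable, latticePhase]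

theorem wOf_zero (hw_nonneg : ∀ k, 0 ≤ hw k) (hw_summable : Summable hw) :
    wOf d hw 0 = ∑' k, hw k := by
  simp [wOf_eq_tsum_cos hw_nonneg hw_summable, latticePhase]

theorem abs_wOf_le_wOf_zero (hw_nonneg : ∀ k, 0 ≤ hw k) (hw_summable : Summable hw)
    (x : Fin d → ℝ) : |wOf d hw x| ≤ wOf d hw 0 := by
  rw [wOf_zero hw_nonneg hw_summable, wOf_eq_tsum_cos hw_nonneg hw_summable, ← Real.norm_eq_abs]
  exact tsum_of_norm_bounded hw_summable.hasSum fun k => norm_mul_cos_latticePhase_le hw_nonneg k x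

theorem sum_sum_cos_latticePhase_sub {ι : Type*} [Fintype ι] (x : ι → Fin d → ℝ)
    (p : Fin d → ℤ) :
    ∑ j, ∑ k, cos (latticePhase p (x j - x k)) =
      (∑ j, cos (latticePhase p (x j))) ^ 2 + (∑ j, sin (latticePhase p (x j))) ^ 2 := by
  simp_rw [latticePhase_sub, cos_sub, sq, Finset.sum_mul_sum, ← Finset.sum_add_distrib]

theorem mul_sq_le_sum_sum_wOf_sub {ι : Type*} [Fintype ι] (hw_nonneg : ∀ k, 0 ≤ hw k)
    (hw_summable : Summable hw) (x : ι → Fin d → ℝ) :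
    hw 0 * (Fintype.card ι : ℝ) ^ 2 ≤ ∑ j, ∑ k, wOf d hw (x j - x k) := by
  have hsum := fun j k => (summable_mul_cos_latticePhase hw_nonneg hw_summable (x j - x k)).hasSum
  have hsum' : HasSum (fun p => ∑ j, ∑ k, hw p * cos (latticePhase p (x j - x k)))
      (∑ j, ∑ k, wOf d hw (x j - x k)) := by
    simp_rw [wOf_eq_tsum_cos hw_nonneg hw_summable]
    exact hasSum_sum fun j _ => hasSum_sum fun k _ => hsum j k
  simp_rw [← Finset.mul_sum, sum_sum_cos_latticePhase_sub] at hsum'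
  refine le_trans (le_of_eq ?_)
    (le_hasSum hsum' 0 fun p _ => mul_nonneg (hw_nonneg p) (by positivity))
  simp [latticePhase]

theorem integral_exp_neg_two_pi_int_mul {n : ℤ} (hn : n ≠ 0) :
    ∫ y in Set.Icc (0 : ℝ) 1, Complex.exp (-(2 * π * n * Complex.I) * y) = 0 := by
  have hc : -(2 * π * n * Complex.I) ≠ 0 := by simp [pi_ne_zero, hn]
  have hperiod : Complex.exp (-(2 * π * n * Complex.I) * (1 : ℝ)) = 1 :=
    Complex.exp_eq_one_iff.2 ⟨-n, by push_cast; ring⟩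
  rw [integral_Icc_eq_integral_Ioc, ← intervalIntegral.integral_of_le zero_le_one,
    integral_exp_mul_complex hc, hperiod]
  simp

theorem exp_latticePhase_sub_mul_I (k : Fin d → ℤ) (z y : Fin d → ℝ) :
    Complex.exp (latticePhase k (z - y) * Complex.I) = Complex.exp (latticePhase k z * Complex.I) *
      ∏ i, Complex.exp (-(2 * π * k i * Complex.I) * y i) := by
  rw [← Complex.exp_sum, ← Complex.exp_add, latticePhase_sub, Complex.ofReal_sub, sub_mul,
    sub_eq_add_neg]
  simp only [latticePhase, neg_mul, Finset.sum_neg_distrib]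
  push_cast
  rw [Finset.sum_mul Finset.univ fun i => 2 * (π : ℂ) * k i * y i]
  simp only [mul_right_comm _ _ Complex.I]

theorem isCompact_cube1 : IsCompact (cube1 d) :=
  isCompact_univ_pi fun _ => isCompact_Icc

instance isProbabilityMeasure_cube1 : IsProbabilityMeasure (volume.restrict (cube1 d)) :=
  isProbabilityMeasure_box

theorem integral_cos_latticePhase_sub {k : Fin d → ℤ} (hk : k ≠ 0) (z : Fin d → ℝ) :
    ∫ y in cube1 d, cos (latticePhase k (z - y)) = 0 := by
  have hint : IntegrableOn (fun y => Complex.exp (latticePhase k (z - y) * Complex.I)) (cube1 d) :=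
    integrableOn_box isCompact_Icc <| by
      have := continuous_latticePhase k
      fun_prop
  have hzero : ∫ y in cube1 d, Complex.exp (latticePhase k (z - y) * Complex.I) = 0 := by
    obtain ⟨i, hi⟩ := Function.ne_iff.1 hk
    simp_rw [exp_latticePhase_sub_mul_I]
    rw [integral_const_mul, cube1, volume_restrict_box, integral_fintype_prod_eq_prod
      (f := fun i (t : ℝ) => Complex.exp (-(2 * π * k i * Complex.I) * t)),
      Finset.prod_eq_zero (Finset.mem_univ i) (integral_exp_neg_two_pi_int_mul hi), mul_zero]
  have hre := integral_re hint
  simpa only [RCLike.re_eq_complex_re, Complex.exp_ofReal_mul_I_re, hzero, Complex.zero_re]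
    using hre

theorem integral_wOf_sub (hw_nonneg : ∀ k, 0 ≤ hw k) (hw_summable : Summable hw)
    (z : Fin d → ℝ) : ∫ y in cube1 d, wOf d hw (z - y) = hw 0 := by
  have hint : ∀ k, IntegrableOn (fun y => hw k * cos (latticePhase k (z - y))) (cube1 d) :=
    fun k => integrableOn_box isCompact_Icc <| by
      have := continuous_latticePhase k
      fun_prop
  have hbound : ∀ k, ∫ y in cube1 d, ‖hw k * cos (latticePhase k (z - y))‖ ≤ hw k := fun k => by
    simpa using integral_mono (hint k).norm (integrable_const (hw k))
      fun y => norm_mul_cos_latticePhase_le hw_nonneg k (z - y)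
  simp_rw [wOf_eq_tsum_cos hw_nonneg hw_summable]
  rw [← integral_tsum_of_summable_integral_norm hint (.of_nonneg_of_le
    (fun k => integral_nonneg fun y => norm_nonneg _) hbound hw_summable), tsum_eq_single 0]
  · simp [latticePhase]
  · intro k hk
    rw [integral_const_mul, integral_cos_latticePhase_sub hk, mul_zero]

theorem isPairPotential_wOf (hw_nonneg : ∀ k, 0 ≤ hw k) (hw_summable : Summable hw) :
    IsPairPotential (wOf d hw) (hw 0) where
  continuous := continuous_wOf hw_nonneg hw_summable
  neg := wOf_neg hw_nonneg hw_summable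
  abs_le := abs_wOf_le_wOf_zero hw_nonneg hw_summable
  integral_sub := integral_wOf_sub hw_nonneg hw_summable
  mul_sq_le_sum N x := by simpa using mul_sq_le_sum_sum_wOf_sub hw_nonneg hw_summable x

end PairPotential

section CrossTerm

variable {ι E F : Type*} [Fintype ι] [MetricSpace E] [ProperSpace E] [MeasureSpace E]
  [BorelSpace E] [IsLocallyFiniteMeasure (volume : Measure E)] [NormedAddCommGroup F]
  [InnerProductSpace ℝ F] {K : Set E} {W : (ι → E) → ℝ} {B : ℝ}

theorem abs_integral_mul_inner_le {a b : (ι → E) → F} {p q : ℝ} (hK : IsCompact K)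
    (ha : Continuous a) (hb : Continuous b) (hW : ∀ x, |W x| ≤ B) (hp : 0 ≤ p) (hq : 0 ≤ q)
    (hpq : B ^ 2 ≤ 4 * p * q) :
    |∫ x in box ι K, W x * inner ℝ (a x) (b x)| ≤
      p * (∫ x in box ι K, ‖a x‖ ^ 2) + q * ∫ x in box ι K, ‖b x‖ ^ 2 := by
  have hpoint : ∀ x, |W x * inner ℝ (a x) (b x)| ≤ p * ‖a x‖ ^ 2 + q * ‖b x‖ ^ 2 := fun x => by
    have hB : 0 ≤ B := (abs_nonneg _).trans (hW x)
    have hsq : (B * (‖a x‖ * ‖b x‖)) ^ 2 ≤ (p * ‖a x‖ ^ 2 + q * ‖b x‖ ^ 2) ^ 2 := by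
      have h := mul_le_mul_of_nonneg_right hpq (sq_nonneg (‖a x‖ * ‖b x‖))
      linarith [sq_nonneg (p * ‖a x‖ ^ 2 - q * ‖b x‖ ^ 2)]
    calc |W x * inner ℝ (a x) (b x)| ≤ B * (‖a x‖ * ‖b x‖) := by
          rw [abs_mul]
          exact mul_le_mul (hW x) (abs_real_inner_le_norm _ _) (abs_nonneg _) hB
      _ ≤ p * ‖a x‖ ^ 2 + q * ‖b x‖ ^ 2 := le_of_sq_le_sq hsq (by positivity)
  rw [← integral_const_mul, ← integral_const_mul,
    ← integral_add (integrableOn_box hK (by fun_prop)) (integrableOn_box hK (by fun_prop))]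
  exact norm_integral_le_of_norm_le (f := fun x => W x * inner ℝ (a x) (b x))
    (integrableOn_box (f := fun x => p * ‖a x‖ ^ 2 + q * ‖b x‖ ^ 2) hK (by fun_prop))
    (.of_forall hpoint)

variable [DecidableEq ι] [IsProbabilityMeasure (volume.restrict K)] [CompleteSpace F] {j k : ι}
  {f : (ι → E) → F}

theorem integral_mul_inner_coordAvg_coordFluct_of_dependsOn (hK : IsCompact K)
    (hW : Continuous W) (hWj : DependsOn W {j}ᶜ) (hf : Continuous f) :
    ∫ x in box ι K, W x * inner ℝ (coordAvg K j f x) (coordFluct K j f x) = 0 := by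
  have hP := continuous_coordAvg (j := j) hK hf
  have hQ := continuous_coordFluct (j := j) hK hf
  have hdep : DependsOn (fun x => W x • coordAvg K j f x) {j}ᶜ := fun _ _ hx =>
    congrArg₂ (· • ·) (hWj hx) (dependsOn_compl_coordAvg f hx)
  simp_rw [← real_inner_smul_left]
  rw [← integral_inner_coordAvg_of_dependsOn hK (hW.fun_smul hP) hdep hQ,
    coordAvg_coordFluct_self hK hf]
  simp

theorem integral_mul_inner_coordAvg_coordAvg_coordFluct {m : ℝ} (hK : IsCompact K)
    (hW : Continuous W) (hWk : ∀ x, coordAvg K k W x = m) (hf : Continuous f) :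
    ∫ x in box ι K,
      W x * inner ℝ (coordAvg K k (coordAvg K j f) x) (coordAvg K k (coordFluct K j f) x) = 0 := by
  have hP := continuous_coordAvg (j := j) hK hf
  have hQ := continuous_coordFluct (j := j) hK hf
  have hdep : DependsOn (fun x => inner ℝ (coordAvg K k (coordAvg K j f) x)
      (coordAvg K k (coordFluct K j f) x)) {k}ᶜ := fun _ _ hx =>
    congrArg₂ (inner ℝ) (dependsOn_compl_coordAvg _ hx) (dependsOn_compl_coordAvg _ hx)
  rw [integral_mul_of_dependsOn hK hW
    ((continuous_coordAvg hK hP).inner (continuous_coordAvg hK hQ)) hdep]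
  simp_rw [hWk]
  rw [integral_const_mul, coordAvg_comm hK hf, ← coordFluct_coordAvg_comm hK hf,
    integral_inner_coordAvg_coordFluct hK (continuous_coordAvg hK hf) (continuous_coordAvg hK hf),
    mul_zero]

theorem integral_mul_inner_coordAvg_coordFluct {m : ℝ} (hK : IsCompact K) (hW : Continuous W)
    (hWk : ∀ x, coordAvg K k W x = m) (hf : Continuous f) :
    ∫ x in box ι K, W x * inner ℝ (coordAvg K j f x) (coordFluct K j f x) =
      (∫ x in box ι K,
        W x * inner ℝ (coordAvg K j f x) (coordFluct K k (coordFluct K j f) x)) +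
      ∫ x in box ι K,
        W x * inner ℝ (coordAvg K k (coordFluct K j f) x) (coordAvg K j (coordFluct K k f) x) := by
  have hP := continuous_coordAvg (j := j) hK hf
  have hQ := continuous_coordFluct (j := j) hK hf
  have hQQ := continuous_coordFluct (j := k) hK hQ
  have hPQ := continuous_coordAvg (j := k) hK hQ
  have hPP := continuous_coordAvg (j := k) hK hP
  have hQP := continuous_coordAvg (j := j) hK (continuous_coordFluct (j := k) hK hf)
  have hsplit : ∀ x, W x * inner ℝ (coordAvg K j f x) (coordFluct K j f x) =
      W x * inner ℝ (coordAvg K j f x) (coordFluct K k (coordFluct K j f) x) +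
      W x * inner ℝ (coordAvg K k (coordFluct K j f) x) (coordAvg K j (coordFluct K k f) x) +
      W x * inner ℝ (coordAvg K k (coordAvg K j f) x) (coordAvg K k (coordFluct K j f) x) :=
    fun x => by
      have hPj := coordAvg_add_coordFluct (K := K) (j := k) (coordAvg K j f) x
      rw [coordFluct_coordAvg_comm hK hf] at hPj
      have hinner : inner ℝ (coordAvg K j f x) (coordAvg K k (coordFluct K j f) x) =
          inner ℝ (coordAvg K k (coordAvg K j f) x) (coordAvg K k (coordFluct K j f) x) +
          inner ℝ (coordAvg K k (coordFluct K j f) x) (coordAvg K j (coordFluct K k f) x) := by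
        rw [← hPj, inner_add_left, real_inner_comm (coordAvg K j (coordFluct K k f) x)]
      rw [← coordAvg_add_coordFluct (K := K) (j := k) (coordFluct K j f) x, inner_add_right, hinner]
      ring
  simp_rw [hsplit]
  rw [integral_add, integral_add, integral_mul_inner_coordAvg_coordAvg_coordFluct hK hW hWk hf,
    add_zero] <;> exact integrableOn_box hK (by fun_prop)

theorem abs_integral_mul_inner_coordAvg_coordFluct_le {m : ℝ} (hK : IsCompact K)
    (hW : Continuous W) (hWB : ∀ x, |W x| ≤ B) (hWk : ∀ x, coordAvg K k W x = m)
    (hf : Continuous f) :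
    |∫ x in box ι K, W x * inner ℝ (coordAvg K j f x) (coordFluct K j f x)| ≤
      B ^ 2 / 2 * (∫ x in box ι K, ‖f x‖ ^ 2) +
        (∫ x in box ι K, ‖coordFluct K k (coordFluct K j f) x‖ ^ 2) / 2 +
        B / 2 * ((∫ x in box ι K, ‖coordFluct K j f x‖ ^ 2) +
          ∫ x in box ι K, ‖coordFluct K k f x‖ ^ 2) := by
  have hQj := continuous_coordFluct (j := j) hK hf
  have hQk := continuous_coordFluct (j := k) hK hf
  have hB : 0 ≤ B := by
    obtain ⟨x⟩ := nonempty_of_isProbabilityMeasure (volume.restrict (box ι K))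
    exact (abs_nonneg _).trans (hWB x)
  have hQQ_le := abs_integral_mul_inner_le (p := B ^ 2 / 2) (q := 1 / 2) hK
    (continuous_coordAvg (j := j) hK hf) (continuous_coordFluct (j := k) hK hQj) hWB
    (by positivity) (by positivity) (by linarith)
  have hPQ_le := abs_integral_mul_inner_le (p := B / 2) (q := B / 2) hK
    (continuous_coordAvg (j := k) hK hQj) (continuous_coordAvg (j := j) hK hQk) hWB
    (by positivity) (by positivity) (by linarith)
  rw [integral_mul_inner_coordAvg_coordFluct hK hW hWk hf]
  refine (abs_add_le _ _).trans ((add_le_add hQQ_le hPQ_le).trans ?_)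
  rw [one_div_mul_eq_div, ← mul_add]
  gcongr ?_ * ?_ + _ + ?_ * (?_ + ?_)
  · exact integral_norm_sq_coordAvg_le hK hf
  · exact integral_norm_sq_coordAvg_le hK hQj
  · exact integral_norm_sq_coordAvg_le hK hQk

end CrossTerm

section SchrodingerForm

variable {ι κ F : Type*} [Fintype ι] [DecidableEq ι] [Fintype κ] [DecidableEq κ]
  [NormedAddCommGroup F] [InnerProductSpace ℝ F]

/-- The density `∑ₖ ⟪∇ₖ f, ∇ₖ g⟫ + U ⟪f, g⟫` of the quadratic form of the Schrödinger operator
`-Δ + U`, for families of points in `ℝ^κ` indexed by `ι`. -/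
def schrodingerDensity (U : (ι → κ → ℝ) → ℝ) (f g : (ι → κ → ℝ) → F) (x : ι → κ → ℝ) : ℝ :=
  (∑ k, ∑ i, inner ℝ (partialDeriv k (Pi.single i 1) f x) (partialDeriv k (Pi.single i 1) g x)) +
    U x * inner ℝ (f x) (g x)

/-- The symmetric bilinear form of the Schrödinger operator `-Δ + U` on `K^ι`. -/
def schrodingerForm (K : Set (κ → ℝ)) (U : (ι → κ → ℝ) → ℝ) (f g : (ι → κ → ℝ) → F) : ℝ :=
  ∫ x in box ι K, schrodingerDensity U f g x

variable {K : Set (κ → ℝ)} {U : (ι → κ → ℝ) → ℝ} {f g : (ι → κ → ℝ) → F} {c : ℝ}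

theorem continuous_schrodingerDensity (hU : Continuous U) (hf : ContDiff ℝ 1 f)
    (hg : ContDiff ℝ 1 g) : Continuous (schrodingerDensity U f g) := by
  have hdf := continuous_partialDeriv hf
  have hdg := continuous_partialDeriv hg
  have hf := hf.continuous
  have hg := hg.continuous
  unfold schrodingerDensity
  fun_prop

theorem schrodingerDensity_const_smul_self (hf : Differentiable ℝ f) (t : ℝ) (x : ι → κ → ℝ) :
    schrodingerDensity U (t • f) (t • f) x = t ^ 2 * schrodingerDensity U f f x := by
  simp only [schrodingerDensity, partialDeriv, fderiv_const_smul (hf x),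
    smul_apply, Pi.smul_apply, real_inner_smul_left, real_inner_smul_right,
    ← Finset.mul_sum]
  ring

theorem schrodingerDensity_add_smul_self (hf : Differentiable ℝ f) (hg : Differentiable ℝ g)
    (t : ℝ) (x : ι → κ → ℝ) :
    schrodingerDensity U (f + t • g) (f + t • g) x = schrodingerDensity U f f x +
      2 * t * schrodingerDensity U f g x + t ^ 2 * schrodingerDensity U g g x := by
  have hinner : ∀ a b : F, inner ℝ (a + t • b) (a + t • b) =
      inner ℝ a a + 2 * t * inner ℝ a b + t ^ 2 * inner ℝ b b := fun a b => by
    simp only [inner_add_left, inner_add_right, real_inner_smul_left, real_inner_smul_right]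
    rw [real_inner_comm a b]
    ring
  simp only [schrodingerDensity, partialDeriv, fderiv_add (hf x) ((hg x).const_smul t),
    fderiv_const_smul (hg x), add_apply, smul_apply,
    Pi.add_apply, Pi.smul_apply, hinner, Finset.sum_add_distrib, ← Finset.mul_sum]
  ring

theorem schrodingerDensity_sum_right {α : Type*} [Fintype α] {g : α → (ι → κ → ℝ) → F}
    (hg : ∀ a, Differentiable ℝ (g a)) (x : ι → κ → ℝ) :
    schrodingerDensity U f (∑ a, g a) x = ∑ a, schrodingerDensity U f (g a) x := by
  simp only [schrodingerDensity, partialDeriv, fderiv_sum fun a _ => hg a x,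
    sum_apply, Finset.sum_apply, inner_sum, Finset.sum_add_distrib,
    ← Finset.mul_sum]
  congr 1
  conv_rhs => rw [Finset.sum_comm]
  exact Finset.sum_congr rfl fun k _ => Finset.sum_comm

theorem schrodingerForm_const_smul_self (hf : Differentiable ℝ f) (t : ℝ) :
    schrodingerForm K U (t • f) (t • f) = t ^ 2 * schrodingerForm K U f f := by
  simp only [schrodingerForm, schrodingerDensity_const_smul_self hf, integral_const_mul]

theorem schrodingerForm_add_smul_self (hK : IsCompact K) (hU : Continuous U)
    (hf : ContDiff ℝ 1 f) (hg : ContDiff ℝ 1 g) (t : ℝ) :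
    schrodingerForm K U (f + t • g) (f + t • g) = schrodingerForm K U f f +
      2 * t * schrodingerForm K U f g + t ^ 2 * schrodingerForm K U g g := by
  have hff := continuous_schrodingerDensity hU hf hf
  have hfg := continuous_schrodingerDensity hU hf hg
  have hgg := continuous_schrodingerDensity hU hg hg
  simp only [schrodingerForm, schrodingerDensity_add_smul_self (hf.differentiable one_ne_zero)
    (hg.differentiable one_ne_zero)]
  rw [integral_add, integral_add, integral_const_mul, integral_const_mul] <;>
    exact integrableOn_box hK (by fun_prop)

theorem schrodingerForm_sum_right {α : Type*} [Fintype α] {g : α → (ι → κ → ℝ) → F}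
    (hK : IsCompact K) (hU : Continuous U) (hf : ContDiff ℝ 1 f) (hg : ∀ a, ContDiff ℝ 1 (g a)) :
    schrodingerForm K U f (∑ a, g a) = ∑ a, schrodingerForm K U f (g a) := by
  simp only [schrodingerForm,
    schrodingerDensity_sum_right fun a => (hg a).differentiable one_ne_zero]
  exact integral_finsetSum _ fun a _ =>
    integrableOn_box hK (continuous_schrodingerDensity hU hf (hg a))

theorem schrodingerForm_sub_const (hK : IsCompact K) (hU : Continuous U) (hf : ContDiff ℝ 1 f)
    (hg : ContDiff ℝ 1 g) :
    schrodingerForm K (fun x => U x - c) f g =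
      schrodingerForm K U f g - c * ∫ x in box ι K, inner ℝ (f x) (g x) := by
  have hdensity : ∀ x, schrodingerDensity (fun x => U x - c) f g x =
      schrodingerDensity U f g x - c * inner ℝ (f x) (g x) := fun x => by
    simp only [schrodingerDensity]
    ring
  simp only [schrodingerForm, hdensity]
  rw [integral_sub (integrableOn_box hK (continuous_schrodingerDensity hU hf hg))
    (integrableOn_box hK ((hf.continuous.inner hg.continuous).const_mul c)), integral_const_mul]

theorem schrodingerForm_eq_sum_integral (hK : IsCompact K) (hU : Continuous U)
    (hf : ContDiff ℝ 1 f) (hg : ContDiff ℝ 1 g) :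
    schrodingerForm K U f g =
      (∑ k, ∑ i, ∫ x in box ι K,
        inner ℝ (partialDeriv k (Pi.single i 1) f x) (partialDeriv k (Pi.single i 1) g x)) +
      ∫ x in box ι K, U x * inner ℝ (f x) (g x) := by
  have hdf := continuous_partialDeriv hf
  have hdg := continuous_partialDeriv hg
  have hint : ∀ k i, IntegrableOn (fun x => inner ℝ (partialDeriv k (Pi.single i 1) f x)
      (partialDeriv k (Pi.single i 1) g x)) (box ι K) :=
    fun k i => integrableOn_box hK (by fun_prop)
  simp only [schrodingerForm, schrodingerDensity]
  rw [integral_add (integrable_finsetSum _ fun k _ => integrable_finsetSum _ fun i _ => hint k i)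
      (integrableOn_box hK (hU.fun_mul (hf.continuous.inner hg.continuous))),
    integral_finsetSum _ fun k _ => integrable_finsetSum _ fun i _ => hint k i]
  simp_rw [integral_finsetSum _ fun i _ => hint _ i]

theorem sum_integral_norm_sq_partialDeriv_add_le_schrodingerForm (hK : IsCompact K)
    (hU : Continuous U) (hc : ∀ x, c ≤ U x) (hf : ContDiff ℝ 1 f) :
    (∑ k, ∑ i, ∫ x in box ι K, ‖partialDeriv k (Pi.single i 1) f x‖ ^ 2) +
      c * (∫ x in box ι K, ‖f x‖ ^ 2) ≤ schrodingerForm K U f f := by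
  have hf' := hf.continuous
  simp only [schrodingerForm_eq_sum_integral hK hU hf hf, real_inner_self_eq_norm_sq,
    ← integral_const_mul]
  refine add_le_add_right (integral_mono (integrableOn_box hK (by fun_prop))
    (integrableOn_box hK (by fun_prop)) fun x => ?_) _
  exact mul_le_mul_of_nonneg_right (hc x) (sq_nonneg _)

theorem sum_integral_norm_sq_coordFluct_add_le_schrodingerForm [CompleteSpace F]
    (hU : Continuous U) (hc : ∀ x, c ≤ U x) (hf : ContDiff ℝ 1 f) :
    (∑ k, ∫ x in box ι (box κ (Set.Icc (0 : ℝ) 1)), ‖coordFluct (box κ (Set.Icc 0 1)) k f x‖ ^ 2) +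
      c * (∫ x in box ι (box κ (Set.Icc (0 : ℝ) 1)), ‖f x‖ ^ 2) ≤
        schrodingerForm (box κ (Set.Icc 0 1)) U f f :=
  (add_le_add_left (Finset.sum_le_sum fun k _ => spectralGap_coordFluct hf k) _).trans
    (sum_integral_norm_sq_partialDeriv_add_le_schrodingerForm
      (isCompact_univ_pi fun _ => isCompact_Icc) hU hc hf)

theorem schrodingerForm_coordFluct_right [CompleteSpace F]
    [IsProbabilityMeasure (volume.restrict K)] (hK : IsCompact K) (hU : Continuous U)
    (hf : ContDiff ℝ 1 f) (j : ι) :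
    schrodingerForm K U f (coordFluct K j f) =
      schrodingerForm K U (coordFluct K j f) (coordFluct K j f) +
        ∫ x in box ι K, U x * inner ℝ (coordAvg K j f x) (coordFluct K j f x) := by
  have hQ : ContDiff ℝ 1 (coordFluct K j f) := contDiff_coordFluct hK (n := 1) hf
  have hP' := continuous_coordAvg (j := j) hK hf.continuous
  have hQ' := hQ.continuous
  have hpotential : ∫ x in box ι K, U x * inner ℝ (f x) (coordFluct K j f x) =
      (∫ x in box ι K, U x * inner ℝ (coordAvg K j f x) (coordFluct K j f x)) +
        ∫ x in box ι K, U x * inner ℝ (coordFluct K j f x) (coordFluct K j f x) := by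
    rw [← integral_add (integrableOn_box hK (by fun_prop)) (integrableOn_box hK (by fun_prop))]
    simp_rw [← mul_add, ← inner_add_left, coordAvg_add_coordFluct]
  rw [schrodingerForm_eq_sum_integral hK hU hf hQ, schrodingerForm_eq_sum_integral hK hU hQ hQ,
    hpotential]
  simp_rw [integral_inner_partialDeriv_coordFluct hK hf j, real_inner_self_eq_norm_sq]
  ring

theorem eq_zero_of_forall_nonneg_quadratic {a b : ℝ} (h : ∀ t : ℝ, 0 ≤ 2 * t * a + t ^ 2 * b) :
    a = 0 := by
  have hdiscrim := discrim_le_zero (a := b) (b := 2 * a) (c := 0) fun t => by linarith [h t]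
  simp only [discrim] at hdiscrim
  nlinarith

theorem schrodingerForm_eq_zero_of_forall_nonneg (hK : IsCompact K) (hU : Continuous U)
    (hf : ContDiff ℝ 1 f) (hg : ContDiff ℝ 1 g) (hff : schrodingerForm K U f f = 0)
    (hnonneg : ∀ t : ℝ, 0 ≤ schrodingerForm K U (f + t • g) (f + t • g)) :
    schrodingerForm K U f g = 0 :=
  eq_zero_of_forall_nonneg_quadratic fun t => by
    simpa only [schrodingerForm_add_smul_self hK hU hf hg, hff, zero_add] using hnonneg t

end SchrodingerForm

section Bosonic

variable {ι κ F : Type*} [Fintype ι] [DecidableEq ι] [Fintype κ] [NormedAddCommGroup F]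
  [NormedSpace ℝ F]

/-- The bosonic wave functions on the torus: smooth, `ℤ^κ`-periodic in each variable and symmetric
under permutations of the variables. -/
structure IsBosonic (f : (ι → κ → ℝ) → F) : Prop where
  contDiff : ContDiff ℝ (⊤ : ℕ∞) f
  periodic : ∀ (x : ι → κ → ℝ) (j : ι) (v : κ → ℤ),
    f (Function.update x j (x j + fun i => (v i : ℝ))) = f x
  symmetric : ∀ (σ : Equiv.Perm ι) (x : ι → κ → ℝ), f (x ∘ σ) = f x

variable {K : Set (κ → ℝ)} {f g : (ι → κ → ℝ) → F}

theorem IsBosonic.contDiff_one (hf : IsBosonic f) : ContDiff ℝ 1 f :=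
  hf.contDiff.of_le (by exact_mod_cast le_top)

theorem isBosonic_const (c : F) : IsBosonic fun _ : ι → κ → ℝ => c :=
  ⟨contDiff_const, fun _ _ _ => rfl, fun _ _ => rfl⟩

theorem IsBosonic.add (hf : IsBosonic f) (hg : IsBosonic g) : IsBosonic (f + g) where
  contDiff := hf.contDiff.add hg.contDiff
  periodic x j v := congrArg₂ (· + ·) (hf.periodic x j v) (hg.periodic x j v)
  symmetric σ x := congrArg₂ (· + ·) (hf.symmetric σ x) (hg.symmetric σ x)

theorem IsBosonic.const_smul (hf : IsBosonic f) (t : ℝ) : IsBosonic (t • f) where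
  contDiff := hf.contDiff.const_smul t
  periodic x j v := congrArg (t • ·) (hf.periodic x j v)
  symmetric σ x := congrArg (t • ·) (hf.symmetric σ x)

theorem IsBosonic.coordAvg_update_add (hf : IsBosonic f) (j k : ι) (x : ι → κ → ℝ) (v : κ → ℤ) :
    coordAvg K k f (Function.update x j (x j + fun i => (v i : ℝ))) = coordAvg K k f x := by
  refine integral_congr_ae (.of_forall fun y => ?_)
  obtain rfl | hjk := eq_or_ne j k
  · simp only [Function.update_idem]
  · have h := hf.periodic (Function.update x k y) j v
    rwa [Function.update_of_ne hjk, Function.update_comm hjk.symm] at h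

theorem IsBosonic.coordAvg_comp_perm (hf : IsBosonic f) (j : ι) (σ : Equiv.Perm ι)
    (x : ι → κ → ℝ) : coordAvg K j f (x ∘ σ) = coordAvg K (σ j) f x := by
  refine integral_congr_ae (.of_forall fun y => ?_)
  simp only [← Function.update_comp_eq_of_injective x σ.injective, hf.symmetric]

theorem IsBosonic.sum_coordFluct (hK : IsCompact K) (hf : IsBosonic f) :
    IsBosonic (∑ j, coordFluct K j f) where
  contDiff := by
    rw [Finset.sum_fn]
    exact .sum fun j _ => contDiff_coordFluct hK hf.contDiff
  periodic x j v := by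
    simp only [Finset.sum_apply, coordFluct, hf.periodic, hf.coordAvg_update_add]
  symmetric σ x := by
    simp only [Finset.sum_apply, coordFluct, hf.symmetric, hf.coordAvg_comp_perm]
    exact Equiv.sum_comp σ fun j => f x - coordAvg K j f x

end Bosonic

section ManyBody

variable {d N : ℕ} {w : (Fin d → ℝ) → ℝ} {m : ℝ}

theorem IsPairPotential.const_mul (hw : IsPairPotential w m) {lam : ℝ} (hlam : 0 ≤ lam) :
    IsPairPotential (fun z => lam * w z) (lam * m) where
  continuous := hw.continuous.const_mul lam
  neg z := by rw [hw.neg]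
  abs_le z := by
    rw [abs_mul, abs_of_nonneg hlam]
    exact mul_le_mul_of_nonneg_left (hw.abs_le z) hlam
  integral_sub z := by rw [integral_const_mul, hw.integral_sub]
  mul_sq_le_sum N x := by
    simp only [← Finset.mul_sum, mul_assoc]
    exact mul_le_mul_of_nonneg_left (hw.mul_sq_le_sum N x) hlam

theorem IsPairPotential.sub_comm (hw : IsPairPotential w m) (y z : Fin d → ℝ) :
    w (y - z) = w (z - y) := by
  rw [← hw.neg, neg_sub]

theorem IsPairPotential.nonneg (hw : IsPairPotential w m) : 0 ≤ w 0 :=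
  (abs_nonneg _).trans (hw.abs_le 0)

theorem IsPairPotential.neg_le_mean (hw : IsPairPotential w m) : -w 0 ≤ m := by
  have habs : ‖∫ y in cube1 d, w (0 - y)‖ ≤ w 0 * (volume.restrict (cube1 d)).real Set.univ :=
    norm_integral_le_of_norm_le_const (.of_forall fun y => hw.abs_le (0 - y))
  rw [hw.integral_sub, probReal_univ, mul_one] at habs
  exact neg_le_of_abs_le habs

theorem IsPairPotential.continuous_sub (hw : IsPairPotential w m) (j k : Fin N) :
    Continuous fun x : Fin N → Fin d → ℝ => w (x j - x k) :=
  hw.continuous.comp ((continuous_apply j).sub (continuous_apply k))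

theorem IsPairPotential.coordAvg_sub (hw : IsPairPotential w m) {j k : Fin N} (hjk : j ≠ k)
    (x : Fin N → Fin d → ℝ) : coordAvg (cube1 d) k (fun x => w (x j - x k)) x = m := by
  simp [coordAvg, hjk, hw.integral_sub]

/-- The total interaction energy `∑_{j<k} w(x_j - x_k)` of the configuration `x`. -/
def pairInteraction (w : (Fin d → ℝ) → ℝ) (x : Fin N → Fin d → ℝ) : ℝ :=
  ∑ j, ∑ k, if j < k then w (x j - x k) else 0

theorem energy_eq_schrodingerForm (lam : ℝ) (w : (Fin d → ℝ) → ℝ)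
    (f : (Fin N → Fin d → ℝ) → ℂ) :
    energy d N lam w f =
      schrodingerForm (cube1 d) (pairInteraction fun z => lam * w z) f f := by
  simp only [pairInteraction, ← mul_ite_zero, ← Finset.mul_sum, schrodingerForm,
    schrodingerDensity, real_inner_self_eq_norm_sq]
  rfl

theorem two_mul_pairInteraction (hw : IsPairPotential w m) (x : Fin N → Fin d → ℝ) :
    2 * pairInteraction w x = (∑ j, ∑ k, w (x j - x k)) - N * w 0 := by
  have htrichotomy : ∀ j k, w (x j - x k) = (if j < k then w (x j - x k) else 0) +
      (if k < j then w (x k - x j) else 0) + if j = k then w 0 else 0 := fun j k => by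
    obtain hjk | rfl | hjk := lt_trichotomy j k
    · simp [hjk, hjk.not_gt, hjk.ne]
    · simp
    · rw [hw.sub_comm]
      simp [hjk, hjk.not_gt, hjk.ne']
  have hswap : ∑ j, ∑ k, (if k < j then w (x k - x j) else 0) = pairInteraction w x :=
    Finset.sum_comm
  have hdiag : ∑ j : Fin N, ∑ k, (if j = k then w 0 else 0) = N * w 0 := by simp
  rw [Finset.sum_congr rfl fun j _ => Finset.sum_congr rfl fun k _ => htrichotomy j k]
  simp_rw [Finset.sum_add_distrib]
  rw [hswap, hdiag, ← pairInteraction]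
  ring

theorem continuous_pairInteraction (hw : Continuous w) :
    Continuous (pairInteraction (N := N) w) := by
  refine continuous_finsetSum _ fun j _ => continuous_finsetSum _ fun k _ => ?_
  split_ifs <;> fun_prop

theorem le_pairInteraction (hw : IsPairPotential w m) (x : Fin N → Fin d → ℝ) :
    (m * N ^ 2 - N * w 0) / 2 ≤ pairInteraction w x := by
  linarith [two_mul_pairInteraction hw x, hw.mul_sq_le_sum N x]

theorem two_mul_integral_pairInteraction_mul (hw : IsPairPotential w m)
    {G : (Fin N → Fin d → ℝ) → ℝ} (hG : Continuous G) :
    2 * (∫ x in box (Fin N) (cube1 d), pairInteraction w x * G x) =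
      (∑ j, ∑ k, ∫ x in box (Fin N) (cube1 d), w (x j - x k) * G x) -
        N * w 0 * ∫ x in box (Fin N) (cube1 d), G x := by
  have hint : ∀ j k, IntegrableOn (fun x => w (x j - x k) * G x) (box (Fin N) (cube1 d)) :=
    fun j k => integrableOn_box isCompact_cube1 ((hw.continuous_sub j k).fun_mul hG)
  have hpoint : ∀ x, 2 * (pairInteraction w x * G x) =
      (∑ j, ∑ k, w (x j - x k) * G x) - N * w 0 * G x := fun x => by
    simp_rw [← mul_assoc, two_mul_pairInteraction hw, sub_mul, Finset.sum_mul]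
  simp_rw [← integral_const_mul, hpoint, ← integral_finsetSum _ fun k _ => hint _ k]
  rw [← integral_finsetSum _ fun j _ => integrable_finsetSum _ fun k _ => hint j k, integral_sub]
  · exact integrable_finsetSum _ fun j _ => integrable_finsetSum _ fun k _ => hint j k
  · exact integrableOn_box isCompact_cube1 (hG.const_mul _)

theorem integral_pairInteraction (hw : IsPairPotential w m) :
    ∫ x in box (Fin N) (cube1 d), pairInteraction w x = (N ^ 2 - N) * m / 2 := by
  have hint : ∀ j k : Fin N, ∫ x in box (Fin N) (cube1 d), w (x j - x k) =
      m + if j = k then w 0 - m else 0 := fun j k => by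
    split_ifs with hjk
    · simp [hjk]
    · rw [← integral_coordAvg (j := k) isCompact_cube1 (hw.continuous_sub j k)]
      simp [hw.coordAvg_sub hjk]
  have hsum : ∑ j : Fin N, ∑ k : Fin N, (m + if j = k then w 0 - m else 0) =
      N ^ 2 * m + N * (w 0 - m) := by
    simp only [Finset.sum_add_distrib, Finset.sum_const, Finset.sum_ite_eq, Finset.mem_univ,
      if_true, Finset.card_univ, Fintype.card_fin, nsmul_eq_mul]
    ring
  have hdouble := two_mul_integral_pairInteraction_mul (N := N) hw continuous_one
  simp only [Pi.one_apply, mul_one, hint, hsum, integral_const, probReal_univ, one_smul] at hdouble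
  linarith

/-- `Ψ` is a normalized ground state, with energy `E`, of the operator `-Δ + U` on the bosonic wave
functions on the torus. -/
structure IsGroundState (U : (Fin N → Fin d → ℝ) → ℝ) (E : ℝ)
    (Ψ : (Fin N → Fin d → ℝ) → ℂ) : Prop where
  isBosonic : IsBosonic Ψ
  integral_norm_sq : ∫ x in box (Fin N) (cube1 d), ‖Ψ x‖ ^ 2 = 1
  schrodingerForm_self : schrodingerForm (cube1 d) U Ψ Ψ = E
  mul_integral_norm_sq_le : ∀ g : (Fin N → Fin d → ℝ) → ℂ, IsBosonic g →
    E * (∫ x in box (Fin N) (cube1 d), ‖g x‖ ^ 2) ≤ schrodingerForm (cube1 d) U g g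

variable {lam c E : ℝ} {U : (Fin N → Fin d → ℝ) → ℝ} {Ψ f g : (Fin N → Fin d → ℝ) → ℂ}

theorem IsAdmissible.isBosonic (hf : IsAdmissible d N f) : IsBosonic f :=
  ⟨hf.1, hf.2.1, hf.2.2.1⟩

theorem sum_integral_norm_sq_coordFluct_cube1_add_le_schrodingerForm (hU : Continuous U)
    (hc : ∀ x, c ≤ U x) (hf : ContDiff ℝ 1 f) :
    (∑ k, ∫ x in box (Fin N) (cube1 d), ‖coordFluct (cube1 d) k f x‖ ^ 2) +
      c * (∫ x in box (Fin N) (cube1 d), ‖f x‖ ^ 2) ≤ schrodingerForm (cube1 d) U f f :=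
  sum_integral_norm_sq_coordFluct_add_le_schrodingerForm hU hc hf

theorem mul_integral_norm_sq_le_schrodingerForm (hU : Continuous U) (hc : ∀ x, c ≤ U x)
    (hf : ContDiff ℝ 1 f) :
    c * (∫ x in box (Fin N) (cube1 d), ‖f x‖ ^ 2) ≤ schrodingerForm (cube1 d) U f f :=
  (le_add_of_nonneg_left (Finset.sum_nonneg fun _ _ => by positivity)).trans
    (sum_integral_norm_sq_coordFluct_cube1_add_le_schrodingerForm hU hc hf)

theorem GSE_le_energy (hw : IsPairPotential w m) (hlam : 0 ≤ lam) (hf : IsAdmissible d N f) :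
    GSE d N lam w ≤ energy d N lam w f := by
  have hv := hw.const_mul hlam
  refine csInf_le ⟨(lam * m * N ^ 2 - N * (lam * w 0)) / 2, ?_⟩ ⟨f, hf, rfl⟩
  rintro _ ⟨g, hg, rfl⟩
  rw [energy_eq_schrodingerForm]
  have h := mul_integral_norm_sq_le_schrodingerForm (continuous_pairInteraction hv.continuous)
    (le_pairInteraction hv) hg.isBosonic.contDiff_one
  rwa [show ∫ x in box (Fin N) (cube1 d), ‖g x‖ ^ 2 = 1 from hg.2.2.2, mul_one] at h

theorem GSE_mul_integral_norm_sq_le_energy (hw : IsPairPotential w m) (hlam : 0 ≤ lam)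
    (hg : IsBosonic g) :
    GSE d N lam w * (∫ x in box (Fin N) (cube1 d), ‖g x‖ ^ 2) ≤ energy d N lam w g := by
  have hv := hw.const_mul hlam
  obtain hzero | hpos := (integral_nonneg fun x => sq_nonneg ‖g x‖ :
    0 ≤ ∫ x in box (Fin N) (cube1 d), ‖g x‖ ^ 2).eq_or_lt
  · have h := mul_integral_norm_sq_le_schrodingerForm (continuous_pairInteraction hv.continuous)
      (le_pairInteraction hv) hg.contDiff_one
    rw [← hzero, mul_zero] at h ⊢
    rwa [energy_eq_schrodingerForm]
  set q := ∫ x in box (Fin N) (cube1 d), ‖g x‖ ^ 2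
  have hq : (√q)⁻¹ ^ 2 * q = 1 := by
    rw [inv_pow, sq_sqrt hpos.le, inv_mul_cancel₀ hpos.ne']
  have hnormalized : IsBosonic ((√q)⁻¹ • g) := hg.const_smul _
  have hadmissible : IsAdmissible d N ((√q)⁻¹ • g) := by
    refine ⟨hnormalized.contDiff, hnormalized.periodic, hnormalized.symmetric, ?_⟩
    simp_rw [Pi.smul_apply, norm_smul, mul_pow, norm_eq_abs, sq_abs, integral_const_mul]
    exact hq
  have hle := GSE_le_energy hw hlam hadmissible
  rw [energy_eq_schrodingerForm, schrodingerForm_const_smul_self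
    (hg.contDiff_one.differentiable one_ne_zero), ← energy_eq_schrodingerForm] at hle
  calc GSE d N lam w * q ≤ (√q)⁻¹ ^ 2 * energy d N lam w g * q := by gcongr
    _ = (√q)⁻¹ ^ 2 * q * energy d N lam w g := by ring
    _ = energy d N lam w g := by rw [hq, one_mul]

theorem isGroundState_of_energy_eq_GSE (hw : IsPairPotential w m) (hlam : 0 ≤ lam)
    (hΨ : IsAdmissible d N Ψ) (hmin : energy d N lam w Ψ = GSE d N lam w) :
    IsGroundState (pairInteraction fun z => lam * w z) (GSE d N lam w) Ψ where
  isBosonic := hΨ.isBosonic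
  integral_norm_sq := hΨ.2.2.2
  schrodingerForm_self := by rw [← energy_eq_schrodingerForm, hmin]
  mul_integral_norm_sq_le g hg := by
    rw [← energy_eq_schrodingerForm]
    exact GSE_mul_integral_norm_sq_le_energy hw hlam hg

namespace IsGroundState

theorem le_integral (hΨ : IsGroundState U E Ψ) :
    E ≤ ∫ x in box (Fin N) (cube1 d), U x := by
  simpa [schrodingerForm, schrodingerDensity, partialDeriv] using
    hΨ.mul_integral_norm_sq_le _ (isBosonic_const 1)

theorem neg_le_pairInteraction_sub (hw : IsPairPotential w m)
    (hΨ : IsGroundState (pairInteraction w) E Ψ) (x : Fin N → Fin d → ℝ) :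
    -(N * w 0) ≤ pairInteraction w x - E := by
  have hE := hΨ.le_integral
  rw [integral_pairInteraction hw] at hE
  have hm := mul_le_mul_of_nonneg_left hw.neg_le_mean N.cast_nonneg
  linarith [le_pairInteraction hw x]

theorem schrodingerForm_sub_self (hU : Continuous U) (hΨ : IsGroundState U E Ψ) :
    schrodingerForm (cube1 d) (fun x => U x - E) Ψ Ψ = 0 := by
  have hC1 := hΨ.isBosonic.contDiff_one
  simp only [schrodingerForm_sub_const isCompact_cube1 hU hC1 hC1, real_inner_self_eq_norm_sq,
    hΨ.schrodingerForm_self, hΨ.integral_norm_sq, mul_one, sub_self]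

theorem schrodingerForm_sub_nonneg (hU : Continuous U) (hΨ : IsGroundState U E Ψ)
    (hg : IsBosonic g) : 0 ≤ schrodingerForm (cube1 d) (fun x => U x - E) g g := by
  have hC1 := hg.contDiff_one
  simp only [schrodingerForm_sub_const isCompact_cube1 hU hC1 hC1, real_inner_self_eq_norm_sq]
  exact sub_nonneg.2 (hΨ.mul_integral_norm_sq_le g hg)

theorem schrodingerForm_sub_eq_zero (hU : Continuous U) (hΨ : IsGroundState U E Ψ)
    (hg : IsBosonic g) : schrodingerForm (cube1 d) (fun x => U x - E) Ψ g = 0 :=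
  schrodingerForm_eq_zero_of_forall_nonneg isCompact_cube1 (hU.sub continuous_const)
    hΨ.isBosonic.contDiff_one hg.contDiff_one (hΨ.schrodingerForm_sub_self hU) fun t =>
      hΨ.schrodingerForm_sub_nonneg hU (hΨ.isBosonic.add (hg.const_smul t))

theorem sum_integral_norm_sq_coordFluct_le (hU : Continuous U) (hc : ∀ x, -c ≤ U x - E)
    (hΨ : IsGroundState U E Ψ) :
    ∑ j, ∫ x in box (Fin N) (cube1 d), ‖coordFluct (cube1 d) j Ψ x‖ ^ 2 ≤ c := by
  have hUE : Continuous fun x => U x - E := hU.sub continuous_const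
  have h := sum_integral_norm_sq_coordFluct_cube1_add_le_schrodingerForm hUE hc
    hΨ.isBosonic.contDiff_one
  rw [hΨ.schrodingerForm_sub_self hU, hΨ.integral_norm_sq] at h
  linarith

theorem sum_sum_integral_norm_sq_coordFluct_le (hU : Continuous U) (hc : ∀ x, -c ≤ U x - E)
    (hΨ : IsGroundState U E Ψ) :
    ∑ j, ∑ k, ∫ x in box (Fin N) (cube1 d),
        ‖coordFluct (cube1 d) k (coordFluct (cube1 d) j Ψ) x‖ ^ 2 ≤
      c * (∑ j, ∫ x in box (Fin N) (cube1 d), ‖coordFluct (cube1 d) j Ψ x‖ ^ 2) -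
        ∑ j, ∫ x in box (Fin N) (cube1 d),
          U x * inner ℝ (coordAvg (cube1 d) j Ψ x) (coordFluct (cube1 d) j Ψ x) := by
  have hK := isCompact_cube1 (d := d)
  have hC1 := hΨ.isBosonic.contDiff_one
  have hUE : Continuous fun x => U x - E := hU.sub continuous_const
  have hQ : ∀ j, ContDiff ℝ 1 (coordFluct (cube1 d) j Ψ) := fun j =>
    contDiff_coordFluct hK (n := 1) hC1
  have hEulerLagrange :
      ∑ j, schrodingerForm (cube1 d) (fun x => U x - E) Ψ (coordFluct (cube1 d) j Ψ) = 0 := by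
    rw [← schrodingerForm_sum_right hK hUE hC1 hQ]
    exact hΨ.schrodingerForm_sub_eq_zero hU (hΨ.isBosonic.sum_coordFluct hK)
  have horthogonal : ∀ j, ∫ x in box (Fin N) (cube1 d),
      (U x - E) * inner ℝ (coordAvg (cube1 d) j Ψ x) (coordFluct (cube1 d) j Ψ x) =
        ∫ x in box (Fin N) (cube1 d),
          U x * inner ℝ (coordAvg (cube1 d) j Ψ x) (coordFluct (cube1 d) j Ψ x) := fun j => by
    have hinner : Continuous fun x =>
        inner ℝ (coordAvg (cube1 d) j Ψ x) (coordFluct (cube1 d) j Ψ x) :=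
      (continuous_coordAvg hK hC1.continuous).inner (hQ j).continuous
    simp_rw [sub_mul]
    rw [integral_sub (integrableOn_box hK (hU.fun_mul hinner))
      (integrableOn_box hK (hinner.const_mul E)), integral_const_mul,
      integral_inner_coordAvg_coordFluct hK hC1.continuous hC1.continuous, mul_zero, sub_zero]
  simp_rw [schrodingerForm_coordFluct_right hK hUE hC1, horthogonal,
    Finset.sum_add_distrib] at hEulerLagrange
  have hgap := Finset.sum_le_sum fun j (_ : j ∈ Finset.univ) =>
    sum_integral_norm_sq_coordFluct_cube1_add_le_schrodingerForm hUE hc (hQ j)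
  rw [Finset.sum_add_distrib, ← Finset.mul_sum] at hgap
  linarith

end IsGroundState

theorem integral_pairInteraction_mul_inner (hw : IsPairPotential w m) (hf : Continuous f)
    (j : Fin N) :
    ∫ x in box (Fin N) (cube1 d), pairInteraction w x *
        inner ℝ (coordAvg (cube1 d) j f x) (coordFluct (cube1 d) j f x) =
      ∑ k, ∫ x in box (Fin N) (cube1 d), w (x j - x k) *
        inner ℝ (coordAvg (cube1 d) j f x) (coordFluct (cube1 d) j f x) := by
  have hK := isCompact_cube1 (d := d)
  set G : (Fin N → Fin d → ℝ) → ℝ := fun x =>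
    inner ℝ (coordAvg (cube1 d) j f x) (coordFluct (cube1 d) j f x)
  set T : Fin N → Fin N → ℝ := fun a b => ∫ x in box (Fin N) (cube1 d), w (x a - x b) * G x
  have hG : Continuous G := (continuous_coordAvg hK hf).inner (continuous_coordFluct hK hf)
  have hT_symm : ∀ a b, T a b = T b a := fun a b =>
    integral_congr_ae (.of_forall fun x => by simp only [hw.sub_comm (x a)])
  have hT_zero : ∀ a b, a ≠ j → b ≠ j → T a b = 0 := fun a b ha hb =>
    integral_mul_inner_coordAvg_coordFluct_of_dependsOn hK (hw.continuous_sub a b)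
      (fun x y hxy => by rw [hxy a ha, hxy b hb]) hf
  have hT_diag : T j j = 0 := by
    simp only [T, G, sub_self, integral_const_mul, integral_inner_coordAvg_coordFluct hK hf hf,
      mul_zero]
  have hcross : ∑ a, ∑ b, T a b = 2 * ∑ b, T j b := by
    have hrow : ∀ a ∈ Finset.univ.erase j, ∑ b, T a b = T j a := fun a ha => by
      rw [Fintype.sum_eq_single j fun b hb => hT_zero a b (Finset.ne_of_mem_erase ha) hb, hT_symm]
    rw [← Finset.add_sum_erase _ _ (Finset.mem_univ j), Finset.sum_congr rfl hrow,
      Finset.sum_erase _ hT_diag, two_mul]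
  have hdouble := two_mul_integral_pairInteraction_mul hw hG
  rw [integral_inner_coordAvg_coordFluct hK hf hf, mul_zero, sub_zero, hcross] at hdouble
  exact mul_left_cancel₀ two_ne_zero hdouble

theorem abs_integral_pair_mul_inner_le (hw : IsPairPotential w m) (hf : Continuous f)
    (j k : Fin N) :
    |∫ x in box (Fin N) (cube1 d), w (x j - x k) *
        inner ℝ (coordAvg (cube1 d) j f x) (coordFluct (cube1 d) j f x)| ≤
      w 0 ^ 2 / 2 * (∫ x in box (Fin N) (cube1 d), ‖f x‖ ^ 2) +
        (∫ x in box (Fin N) (cube1 d),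
          ‖coordFluct (cube1 d) k (coordFluct (cube1 d) j f) x‖ ^ 2) / 2 +
        w 0 / 2 * ((∫ x in box (Fin N) (cube1 d), ‖coordFluct (cube1 d) j f x‖ ^ 2) +
          ∫ x in box (Fin N) (cube1 d), ‖coordFluct (cube1 d) k f x‖ ^ 2) := by
  obtain ⟨c, hc⟩ : ∃ c, ∀ x, coordAvg (cube1 d) k (fun x => w (x j - x k)) x = c := by
    obtain rfl | hjk := eq_or_ne j k
    · exact ⟨w 0, fun x => by simp [coordAvg]⟩
    · exact ⟨m, hw.coordAvg_sub hjk⟩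
  exact abs_integral_mul_inner_coordAvg_coordFluct_le isCompact_cube1 (hw.continuous_sub j k)
    (fun x => hw.abs_le _) hc hf

theorem sum_abs_integral_pairInteraction_mul_inner_le (hw : IsPairPotential w m)
    (hf : Continuous f) :
    ∑ j, |∫ x in box (Fin N) (cube1 d), pairInteraction w x *
        inner ℝ (coordAvg (cube1 d) j f x) (coordFluct (cube1 d) j f x)| ≤
      (N * w 0) ^ 2 / 2 * (∫ x in box (Fin N) (cube1 d), ‖f x‖ ^ 2) +
        (∑ j, ∑ k, ∫ x in box (Fin N) (cube1 d),
          ‖coordFluct (cube1 d) k (coordFluct (cube1 d) j f) x‖ ^ 2) / 2 +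
        N * w 0 * ∑ j, ∫ x in box (Fin N) (cube1 d), ‖coordFluct (cube1 d) j f x‖ ^ 2 := by
  simp_rw [integral_pairInteraction_mul_inner hw hf]
  refine (Finset.sum_le_sum fun j _ => (Finset.abs_sum_le_sum_abs _ _).trans
    (Finset.sum_le_sum fun k _ => abs_integral_pair_mul_inner_le hw hf j k)).trans_eq ?_
  simp only [Finset.sum_add_distrib, ← Finset.mul_sum, ← Finset.sum_div,
    Finset.sum_const, Finset.card_univ, Fintype.card_fin, nsmul_eq_mul]
  ring

theorem excited_particles_bound_general (hw : IsPairPotential w m) (hlam : 0 ≤ lam)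
    (hΨ : IsAdmissible d N Ψ) (hmin : energy d N lam w Ψ = GSE d N lam w) :
    NplusExp d N Ψ ≤ lam * N * w 0 ∧ NplusSqExp d N Ψ ≤ 5 * (lam * N * w 0) ^ 2 := by
  have hv := hw.const_mul hlam
  have hground := isGroundState_of_energy_eq_GSE hw hlam hΨ hmin
  have hU := continuous_pairInteraction (N := N) hv.continuous
  have hlower := hground.neg_le_pairInteraction_sub hv
  have hfirst := hground.sum_integral_norm_sq_coordFluct_le hU hlower
  have hsecond := hground.sum_sum_integral_norm_sq_coordFluct_le hU hlower
  have hcross := sum_abs_integral_pairInteraction_mul_inner_le hv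
    hground.isBosonic.contDiff.continuous
  rw [hground.integral_norm_sq] at hcross
  have hneg := neg_le_of_abs_le (Finset.abs_sum_le_sum_abs (fun j => ∫ x in box (Fin N) (cube1 d),
    pairInteraction (fun z => lam * w z) x *
      inner ℝ (coordAvg (cube1 d) j Ψ x) (coordFluct (cube1 d) j Ψ x)) Finset.univ)
  have hκ : 0 ≤ N * (lam * w 0) := mul_nonneg N.cast_nonneg hv.nonneg
  have hprod := mul_le_mul_of_nonneg_left hfirst hκ
  rw [show lam * N * w 0 = N * (lam * w 0) by ring]
  refine ⟨hfirst, ?_⟩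
  rw [show NplusSqExp d N Ψ = ∑ j, ∑ k, ∫ x in box (Fin N) (cube1 d),
    ‖coordFluct (cube1 d) k (coordFluct (cube1 d) j Ψ) x‖ ^ 2 from Finset.sum_comm]
  linarith

end ManyBody

/-- **Lemma 3.2 (Number of excited particles).** There is a constant `C > 0`, depending only
on `d` and `ŵ`, such that for every `N ≥ 2`, every `0 < λ ≤ 2/N`, and every admissible
minimizer `Ψ` of the energy, `⟨𝒩₊⟩_Ψ ≤ C` and `⟨𝒩₊²⟩_Ψ ≤ C`. -/
theorem excited_particles_bound (d : ℕ) (hd : 1 ≤ d)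
    (hw : (Fin d → ℤ) → ℝ) (hw_nonneg : ∀ k, 0 ≤ hw k)
    (hw_even : ∀ k, hw (-k) = hw k) (hw_summable : Summable hw) :
    ∃ C : ℝ, 0 < C ∧
      ∀ N : ℕ, 2 ≤ N → ∀ lam : ℝ, 0 < lam → lam ≤ 2 / (N : ℝ) →
        ∀ Ψ : (Fin N → Fin d → ℝ) → ℂ, IsAdmissible d N Ψ →
          energy d N lam (wOf d hw) Ψ = GSE d N lam (wOf d hw) →
            NplusExp d N Ψ ≤ C ∧ NplusSqExp d N Ψ ≤ C := by
  have hpotential := isPairPotential_wOf hw_nonneg hw_summable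
  have hw0 : 0 ≤ wOf d hw 0 := hpotential.nonneg
  refine ⟨2 * wOf d hw 0 + 5 * (2 * wOf d hw 0) ^ 2 + 1, by positivity, ?_⟩
  intro N hN lam hlam hlamN Ψ hΨ hmin
  have hκ : lam * N * wOf d hw 0 ≤ 2 * wOf d hw 0 := by
    gcongr
    rwa [le_div_iff₀ (by positivity)] at hlamN
  obtain ⟨hfirst, hsecond⟩ := excited_particles_bound_general hpotential hlam.le hΨ hmin
  have hκ_sq : (lam * N * wOf d hw 0) ^ 2 ≤ (2 * wOf d hw 0) ^ 2 := by gcongr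
  exact ⟨by linarith [sq_nonneg (2 * wOf d hw 0)], by linarith⟩
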